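/- Let T > 0 and k ≥ 0, and let Z be a GSP-Wiener process on [0,T], i.e. a centered Gaussian process with covariance K(t,s) = min(k+t, k+s), with almost surely continuous paths, viewed as a random variable with values in L²([0,T]). Then the quadratic quantization error has the sharp asymptotics e_n(Z) ~ (√2·T/π)·(ln n)^{-1/2}, i.e. lim_{n→∞} (ln n)^{1/2} · e_n(Z) = √2·T/π. -/

import Mathlib

open MeasureTheory ProbabilityTheory Filter

/-- The `n`-th quadratic quantization error of an `H`-valued random variable:
the infimum over all codebooks `α ⊆ H` with `|α| ≤ n` of
`(E min_{a∈α} ‖X - a‖²)^{1/2}`. -/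
noncomputable def quantErr {Ω : Type*} [MeasurableSpace Ω] (P : Measure Ω)
    {H : Type*} [NormedAddCommGroup H] (X : Ω → H) (n : ℕ) : ℝ :=
  sInf { r : ℝ | ∃ α : Finset H, ∃ hα : α.Nonempty, α.card ≤ n ∧
    r = Real.sqrt (∫ ω, α.inf' hα (fun a => ‖X ω - a‖ ^ 2) ∂P) }

open scoped NNReal ENNReal Topology

/-!
On the cosine basis of `L²([0, T])` the covariance is diagonal modulo constants: the coefficients
of index `j ≥ 1` are independent centered Gaussians with variances `λ_j = T² / (π² j²)`, while the
constant coefficient is a single real variable, which a grid of polynomial size resolves.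

For such a spectrum the quantization problem is the rate-distortion problem of a Gaussian vector at
water level `θ = λ_d`. By Stirling's formula `½ ∑_{j ≤ d} log (λ_j / θ) ~ d`, so `n ≈ exp d`
codewords are needed; the distortion is then `d θ + ∑_{j > d} λ_j ~ 2 T² / (π² d)`, and hence
`log n * e_n² → 2 T² / π²`. The lower bound is Shannon's, in its parametric form. For the upper
bound a random codebook is used, whose failure probability, exponentially small in `d` by Chernoff's
inequality, absorbs the polynomial cost of missing the codebook.
-/

section GaussianTilt

lemma gaussianPDFReal_mul_exp_quadratic {v : ℝ≥0} (hv : v ≠ 0) {b : ℝ} (hb : 2 * b * v < 1)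
    (c x : ℝ) :
    gaussianPDFReal 0 v x * Real.exp (b * x ^ 2 + c * x) =
      (√(1 - 2 * b * v))⁻¹ * Real.exp (c ^ 2 * v / (2 * (1 - 2 * b * v))) *
        gaussianPDFReal (c * (v / (1 - 2 * b * v))) (v / (1 - 2 * b * v).toNNReal) x := by
  have : (0 : ℝ) < v := by positivity
  set r := 1 - 2 * b * v with hr
  have hr' : 0 < r := by linarith
  have hnorm : √(2 * Real.pi * v) = √r * √(2 * Real.pi * (v / r)) := by
    rw [← Real.sqrt_mul hr'.le]
    congr 1
    field_simp
  have hexp : -(x - 0) ^ 2 / (2 * v) + (b * x ^ 2 + c * x) =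
      c ^ 2 * v / (2 * r) + -(x - c * (v / r)) ^ 2 / (2 * (v / r)) := by
    have hb : b = (1 - r) / (2 * v) := by rw [hr]; field_simp; ring
    rw [hb]
    field_simp
    ring
  simp only [gaussianPDFReal, NNReal.coe_div, Real.coe_toNNReal _ hr'.le]
  rw [hnorm, mul_assoc, ← Real.exp_add, hexp, Real.exp_add, mul_inv]
  ring

lemma integrable_exp_quadratic_gaussianReal {v : ℝ≥0} {b : ℝ} (hb : 2 * b * v < 1) (c : ℝ) :
    Integrable (fun x ↦ Real.exp (b * x ^ 2 + c * x)) (gaussianReal 0 v) := by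
  rcases eq_or_ne v 0 with rfl | hv
  · simpa using integrable_dirac (by simp)
  rw [gaussianReal_of_var_ne_zero _ hv,
    integrable_withDensity_iff_integrable_smul' (measurable_gaussianPDF 0 v)
      (ae_of_all _ fun _ ↦ gaussianPDF_lt_top)]
  simp only [toReal_gaussianPDF, smul_eq_mul, gaussianPDFReal_mul_exp_quadratic hv hb]
  exact (integrable_gaussianPDFReal _ _).const_mul _

lemma integral_exp_quadratic_gaussianReal {v : ℝ≥0} {b : ℝ} (hb : 2 * b * v < 1) (c : ℝ) :
    ∫ x, Real.exp (b * x ^ 2 + c * x) ∂gaussianReal 0 v =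
      (√(1 - 2 * b * v))⁻¹ * Real.exp (c ^ 2 * v / (2 * (1 - 2 * b * v))) := by
  rcases eq_or_ne v 0 with rfl | hv
  · simp
  have hτ : v / (1 - 2 * b * v).toNNReal ≠ 0 :=
    div_ne_zero hv (Real.toNNReal_pos.2 (by linarith)).ne'
  simp only [integral_gaussianReal_eq_integral_smul hv, smul_eq_mul,
    gaussianPDFReal_mul_exp_quadratic hv hb, integral_const_mul]
  rw [integral_gaussianPDFReal_eq_one _ hτ, mul_one]

/-- The density of the Gaussian law `N(a, θ)` with respect to `N(0, m)`. As a function of `a` it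
is also the kernel that couples `N(0, m - θ)` (the codewords) to `N(0, m)` (the source) when
`θ ≤ m`. -/
noncomputable def gaussianTilt (m θ : ℝ≥0) (x a : ℝ) : ℝ :=
  √(m / θ) * Real.exp (x ^ 2 / (2 * m) - (x - a) ^ 2 / (2 * θ))

lemma gaussianTilt_nonneg (m θ : ℝ≥0) (x a : ℝ) : 0 ≤ gaussianTilt m θ x a := by
  unfold gaussianTilt; positivity

@[fun_prop]
lemma continuous_gaussianTilt (m θ : ℝ≥0) :
    Continuous (fun p : ℝ × ℝ ↦ gaussianTilt m θ p.1 p.2) := by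
  unfold gaussianTilt; fun_prop

lemma gaussianTilt_eq_exp_quadratic_left (m θ : ℝ≥0) (x a : ℝ) :
    gaussianTilt m θ x a = √(m / θ) * Real.exp (-(a ^ 2 / (2 * θ))) *
      Real.exp (((m : ℝ)⁻¹ / 2 - (θ : ℝ)⁻¹ / 2) * x ^ 2 + a / θ * x) := by
  rw [gaussianTilt, mul_assoc, ← Real.exp_add]
  ring_nf

lemma gaussianTilt_eq_exp_quadratic_right (m θ : ℝ≥0) (x a : ℝ) :
    gaussianTilt m θ x a = √(m / θ) * Real.exp (((m : ℝ)⁻¹ / 2 - (θ : ℝ)⁻¹ / 2) * x ^ 2) *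
      Real.exp (-((θ : ℝ)⁻¹ / 2) * a ^ 2 + x / θ * a) := by
  rw [gaussianTilt, mul_assoc, ← Real.exp_add]
  ring_nf

lemma one_sub_two_mul_tilt_coeff {v θ : ℝ≥0} (hθ : 0 < θ) :
    1 - 2 * (((max v θ : ℝ≥0) : ℝ)⁻¹ / 2 - (θ : ℝ)⁻¹ / 2) * v = (max v θ : ℝ≥0) / (θ : ℝ) := by
  have hθ' : (0 : ℝ) < θ := hθ
  rcases le_total v θ with h | h
  · simp [max_eq_right h, hθ'.ne']
  · have : (0 : ℝ) < v := hθ.trans_le h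
    rw [max_eq_left h]
    field_simp
    ring

lemma integrable_gaussianTilt_left {v θ : ℝ≥0} (hθ : 0 < θ) (a : ℝ) :
    Integrable (fun x ↦ gaussianTilt (max v θ) θ x a) (gaussianReal 0 v) := by
  simp only [gaussianTilt_eq_exp_quadratic_left]
  refine (integrable_exp_quadratic_gaussianReal ?_ _).const_mul _
  have : (0 : ℝ) < (max v θ : ℝ≥0) / (θ : ℝ) :=
    div_pos (NNReal.coe_pos.2 (hθ.trans_le (le_max_right v θ))) hθ
  linarith [one_sub_two_mul_tilt_coeff (v := v) hθ]

lemma integral_gaussianTilt_left_le_one {v θ : ℝ≥0} (hθ : 0 < θ) (a : ℝ) :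
    ∫ x, gaussianTilt (max v θ) θ x a ∂gaussianReal 0 v ≤ 1 := by
  have hm : (0 : ℝ) < max (v : ℝ) θ := (NNReal.coe_pos.2 hθ).trans_le (le_max_right _ _)
  have hθ' : (0 : ℝ) < θ := hθ
  have hcoeff := one_sub_two_mul_tilt_coeff (v := v) hθ
  simp only [gaussianTilt_eq_exp_quadratic_left, integral_const_mul]
  rw [integral_exp_quadratic_gaussianReal (by rw [NNReal.coe_max] at *; linarith [div_pos hm hθ']),
    hcoeff, NNReal.coe_max]
  set m := max (v : ℝ) θ
  have hsqrt : √(m / θ) ≠ 0 := (Real.sqrt_pos.2 (div_pos hm hθ')).ne'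
  calc √(m / θ) * Real.exp (-(a ^ 2 / (2 * θ))) *
        ((√(m / θ))⁻¹ * Real.exp ((a / θ) ^ 2 * v / (2 * (m / θ))))
      = Real.exp (-(a ^ 2 / (2 * θ)) * (1 - v / m)) := by
        rw [mul_mul_mul_comm, mul_inv_cancel₀ hsqrt, one_mul, ← Real.exp_add]
        congr 1
        field_simp
        ring
    _ ≤ 1 := by
        have : v / m ≤ 1 := (div_le_one hm).2 (le_max_left _ _)
        exact Real.exp_le_one_iff.2
          (mul_nonpos_of_nonpos_of_nonneg (by rw [neg_nonpos]; positivity) (by linarith))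

lemma integral_gaussianTilt_right {v θ : ℝ≥0} (hθ : 0 < θ) (hθv : θ ≤ v) (x : ℝ) :
    ∫ a, gaussianTilt v θ x a ∂gaussianReal 0 (v - θ) = 1 := by
  have hθ' : (0 : ℝ) < θ := hθ
  have hv : (0 : ℝ) < v := hθ.trans_le hθv
  have hcoeff : 1 - 2 * (-((θ : ℝ)⁻¹ / 2)) * (v - θ : ℝ≥0) = v / θ := by
    rw [NNReal.coe_sub hθv]; field_simp; ring
  have hsqrt : √((v : ℝ) / θ) ≠ 0 := (Real.sqrt_pos.2 (div_pos hv hθ')).ne'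
  simp only [gaussianTilt_eq_exp_quadratic_right, integral_const_mul]
  rw [integral_exp_quadratic_gaussianReal (by linarith [div_pos hv hθ']), hcoeff,
    mul_mul_mul_comm, mul_inv_cancel₀ hsqrt, one_mul, ← Real.exp_add, Real.exp_eq_one_iff,
    NNReal.coe_sub hθv]
  field_simp
  ring

lemma lintegral_gaussianTilt_right {v θ : ℝ≥0} (hθ : 0 < θ) (hθv : θ ≤ v) (x : ℝ) :
    ∫⁻ a, ENNReal.ofReal (gaussianTilt v θ x a) ∂gaussianReal 0 (v - θ) = 1 := by
  have h := integral_gaussianTilt_right hθ hθv x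
  rw [← ofReal_integral_eq_lintegral_ofReal (.of_integral_ne_zero (by simp [h]))
    (ae_of_all _ fun a ↦ gaussianTilt_nonneg v θ x a), h, ENNReal.ofReal_one]

lemma gaussianReal_withDensity_gaussianTilt {v θ : ℝ≥0} (hv : 0 < v) (hθ : 0 < θ) (a : ℝ) :
    (gaussianReal 0 v).withDensity (fun x ↦ ENNReal.ofReal (gaussianTilt v θ x a)) =
      gaussianReal a θ := by
  have : (0 : ℝ) < v := hv
  have : (0 : ℝ) < θ := hθ
  rw [gaussianReal_of_var_ne_zero _ hv.ne', gaussianReal_of_var_ne_zero _ hθ.ne',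
    ← withDensity_mul _ (measurable_gaussianPDF 0 v) (by fun_prop)]
  congr 1 with x
  have hnorm : √(2 * Real.pi * v) = √((v : ℝ) / θ) * √(2 * Real.pi * θ) := by
    rw [← Real.sqrt_mul (by positivity)]
    congr 1
    field_simp
  have hexp : -x ^ 2 / (2 * v) + (x ^ 2 / (2 * v) - (x - a) ^ 2 / (2 * θ)) =
      -(x - a) ^ 2 / (2 * θ) := by ring
  rw [Pi.mul_apply, gaussianPDF, gaussianPDF,
    ← ENNReal.ofReal_mul (gaussianPDFReal_nonneg _ _ _)]
  congr 1
  simp only [gaussianPDFReal, gaussianTilt, sub_zero]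
  rw [← hexp, Real.exp_add, hnorm]
  field_simp

end GaussianTilt

section ShannonLowerBound

lemma integrable_finset_inf' {Ω κ : Type*} [MeasurableSpace Ω] {μ : Measure Ω} {α : Finset κ}
    (hα : α.Nonempty) {d : κ → Ω → ℝ} (hd : ∀ a ∈ α, Integrable (d a) μ) :
    Integrable (fun ω ↦ α.inf' hα fun a ↦ d a ω) μ := by
  have h : Integrable (α.inf' hα d) μ :=
    Finset.inf'_induction hα d (p := fun f ↦ Integrable f μ) (fun _ hf _ hg ↦ hf.inf hg) hd
  simpa only [← Finset.inf'_apply] using h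

/-- Shannon's lower bound in parametric form: `fun x ↦ exp (Λ x - d a x / s)` is a subprobability
density for each codeword `a`, so the sum of the `α.card` densities dominates
`exp (Λ - (min_a d a) / s)`; conclude with Jensen's inequality. -/
lemma mul_integral_sub_log_card_le_integral_inf' {Ω κ : Type*} [MeasurableSpace Ω]
    {μ : Measure Ω} [IsProbabilityMeasure μ] {α : Finset κ} (hα : α.Nonempty) {s : ℝ} (hs : 0 < s)
    {Λ : Ω → ℝ} {d : κ → Ω → ℝ} (hΛ : Integrable Λ μ) (hd : ∀ a ∈ α, Integrable (d a) μ)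
    (hint : ∀ a ∈ α, Integrable (fun x ↦ Real.exp (Λ x - d a x / s)) μ)
    (hle : ∀ a ∈ α, ∫ x, Real.exp (Λ x - d a x / s) ∂μ ≤ 1) :
    s * (∫ x, Λ x ∂μ - Real.log α.card) ≤ ∫ x, α.inf' hα (fun a ↦ d a x) ∂μ := by
  set m : Ω → ℝ := fun x ↦ α.inf' hα (fun a ↦ d a x)
  set Y : Ω → ℝ := fun x ↦ ∑ a ∈ α, Real.exp (Λ x - d a x / s)
  have hcard : (0 : ℝ) < α.card := by exact_mod_cast hα.card_pos
  have hm : Integrable m μ := integrable_finset_inf' hα hd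
  have hY : Integrable Y μ := integrable_finsetSum _ hint
  have hY_le : ∫ x, Y x ∂μ ≤ α.card := by
    rw [integral_finsetSum _ hint]
    simpa using Finset.sum_le_sum hle
  have hpt (x : Ω) : Λ x - m x / s ≤ Y x / α.card + (Real.log α.card - 1) := by
    obtain ⟨a, ha, hma⟩ := Finset.exists_mem_eq_inf' hα fun a ↦ d a x
    have hmY : Real.exp (Λ x - m x / s) ≤ Y x := by
      simp only [m, hma]
      exact Finset.single_le_sum (f := fun a ↦ Real.exp (Λ x - d a x / s))
        (fun _ _ ↦ (Real.exp_pos _).le) ha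
    have h := Real.add_one_le_exp (Λ x - m x / s - Real.log α.card)
    rw [Real.exp_sub, Real.exp_log hcard] at h
    linarith [div_le_div_of_nonneg_right hmY hcard.le]
  have hI := integral_mono (hΛ.sub (hm.div_const s))
    ((hY.div_const α.card).add (integrable_const _)) hpt
  simp only [Pi.sub_apply, Pi.add_apply] at hI
  rw [integral_sub hΛ (hm.div_const s), integral_add (hY.div_const _) (integrable_const _),
    integral_div, integral_div, integral_const, probReal_univ, one_smul] at hI
  have hmul : ∫ x, Λ x ∂μ - Real.log α.card ≤ (∫ x, m x ∂μ) / s := by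
    linarith [(div_le_one hcard).2 hY_le]
  rwa [le_div_iff₀' hs] at hmul

lemma integrable_sq_gaussianReal (v : ℝ≥0) : Integrable (fun x ↦ x ^ 2) (gaussianReal 0 v) :=
  (memLp_id_gaussianReal' 2 (by simp)).integrable_sq

lemma integral_sq_gaussianReal (v : ℝ≥0) : ∫ x, x ^ 2 ∂gaussianReal 0 v = v := by
  have h := variance_id_gaussianReal (μ := 0) (v := v)
  rw [variance_eq_integral (by fun_prop)] at h
  simpa using h

/-- The law of a vector of independent centered Gaussian variables with variances `v j`. -/
noncomputable abbrev gaussianPi {ι : Type*} [Fintype ι] (v : ι → ℝ≥0) : Measure (ι → ℝ) :=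
  Measure.pi fun j ↦ gaussianReal 0 (v j)

variable {ι κ : Type*} [Fintype ι]

lemma integrable_sq_eval_gaussianPi (v : ι → ℝ≥0) (j : ι) :
    Integrable (fun x ↦ x j ^ 2) (gaussianPi v) :=
  integrable_comp_eval (μ := fun j ↦ gaussianReal 0 (v j)) (i := j)
    (integrable_sq_gaussianReal (v j))

lemma integral_sq_eval_gaussianPi (v : ι → ℝ≥0) (j : ι) :
    ∫ x, x j ^ 2 ∂gaussianPi v = v j := by
  rw [integral_comp_eval (μ := fun j ↦ gaussianReal 0 (v j)) (i := j) (f := fun x : ℝ ↦ x ^ 2)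
    (by fun_prop), integral_sq_gaussianReal]

lemma integrable_sum_sub_sq_gaussianPi (v : ι → ℝ≥0) (b : ι → ℝ) :
    Integrable (fun x ↦ ∑ j, (x j - b j) ^ 2) (gaussianPi v) := by
  refine integrable_finsetSum _ fun j _ ↦ integrable_comp_eval
    (μ := fun j ↦ gaussianReal 0 (v j)) (i := j) (f := fun x ↦ (x - b j) ^ 2) ?_
  exact ((memLp_id_gaussianReal' 2 (by simp)).sub (memLp_const _)).integrable_sq

lemma prod_gaussianTilt_eq_exp {m θ : ι → ℝ≥0} (hm : ∀ j, 0 < m j) (hθ : ∀ j, 0 < θ j)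
    (x a : ι → ℝ) :
    ∏ j, gaussianTilt (m j) (θ j) (x j) (a j) =
      Real.exp (∑ j, (Real.log (m j / θ j) / 2 + x j ^ 2 / (2 * m j))
        - ∑ j, (x j - a j) ^ 2 / (2 * θ j)) := by
  rw [← Finset.sum_sub_distrib, Real.exp_sum]
  refine Finset.prod_congr rfl fun j _ ↦ ?_
  have h : (0 : ℝ) < m j / θ j := div_pos (hm j) (hθ j)
  rw [gaussianTilt, add_sub_assoc, Real.exp_add, ← Real.log_sqrt h.le,
    Real.exp_log (Real.sqrt_pos.2 h)]

/-- What a coordinate of variance `v` contributes to Shannon's lower bound at water level `θ`, in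
the reverse water-filling of rate-distortion theory. -/
noncomputable def waterFilling (v θ : ℝ≥0) : ℝ :=
  Real.log ((max v θ : ℝ≥0) / θ) + v / (max v θ : ℝ≥0)

lemma waterFilling_of_le {v θ : ℝ≥0} (hθ : 0 < θ) (h : θ ≤ v) :
    waterFilling v θ = Real.log (v / θ) + 1 := by
  rw [waterFilling, max_eq_left h, div_self (NNReal.coe_pos.2 (hθ.trans_le h)).ne']

lemma waterFilling_of_ge {v θ : ℝ≥0} (hθ : 0 < θ) (h : v ≤ θ) : waterFilling v θ = v / θ := by
  rw [waterFilling, max_eq_right h, div_self (NNReal.coe_pos.2 hθ).ne', Real.log_one, zero_add]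

lemma mul_sum_waterFilling_sub_log_card_le_integral_inf' (v : ι → ℝ≥0) {θ : ℝ≥0} (hθ : 0 < θ)
    {α : Finset κ} (hα : α.Nonempty) (b : κ → ι → ℝ) :
    θ * (∑ j, waterFilling (v j) θ - 2 * Real.log α.card) ≤
      ∫ x, α.inf' hα (fun a ↦ ∑ j, (x j - b a j) ^ 2) ∂gaussianPi v := by
  have hm (j : ι) : 0 < max (v j) θ := hθ.trans_le (le_max_right _ _)
  set Λ : (ι → ℝ) → ℝ := fun x ↦
    ∑ j, (Real.log (max (v j) θ / θ) / 2 + x j ^ 2 / (2 * max (v j) θ))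
  have hΛj (j : ι) : Integrable
      (fun x ↦ Real.log (max (v j) θ / θ) / 2 + x j ^ 2 / (2 * max (v j) θ)) (gaussianPi v) :=
    (integrable_const _).add ((integrable_sq_eval_gaussianPi v j).div_const _)
  have hΛ : ∫ x, Λ x ∂gaussianPi v = (∑ j, waterFilling (v j) θ) / 2 := by
    rw [integral_finsetSum _ fun j _ ↦ hΛj j, Finset.sum_div]
    refine Finset.sum_congr rfl fun j _ ↦ ?_
    rw [waterFilling, integral_add (integrable_const _)
      ((integrable_sq_eval_gaussianPi v j).div_const _), integral_const, probReal_univ, one_smul,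
      integral_div, integral_sq_eval_gaussianPi, add_div, div_div, mul_comm (2 : ℝ)]
  have hexp (a : κ) (x : ι → ℝ) : Real.exp (Λ x - (∑ j, (x j - b a j) ^ 2) / (2 * θ)) =
      ∏ j, gaussianTilt (max (v j) θ) θ (x j) (b a j) := by
    rw [prod_gaussianTilt_eq_exp hm fun _ ↦ hθ, Finset.sum_div]
  have hmain := mul_integral_sub_log_card_le_integral_inf' (μ := gaussianPi v) hα
    (s := 2 * θ) (by positivity) (Λ := Λ) (d := fun a x ↦ ∑ j, (x j - b a j) ^ 2)
    (integrable_finsetSum _ fun j _ ↦ hΛj j)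
    (fun a _ ↦ integrable_sum_sub_sq_gaussianPi v (b a))
    (fun a _ ↦ by
      simp only [hexp]
      exact Integrable.fintype_prod_dep fun j ↦ integrable_gaussianTilt_left hθ _)
    (fun a _ ↦ by
      simp only [hexp]
      refine (integral_fintype_prod_eq_prod
        (f := fun j x ↦ gaussianTilt (max (v j) θ) θ x (b a j))).trans_le (Finset.prod_le_one
        (fun j _ ↦ integral_nonneg fun x ↦ gaussianTilt_nonneg _ _ x _)
        fun j _ ↦ integral_gaussianTilt_left_le_one hθ _))
  rw [hΛ] at hmain
  linarith

end ShannonLowerBound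

section ChernoffBound

lemma exists_pos_exp_neg_mul_mgf_lt_one {Ω : Type*} [MeasurableSpace Ω] {μ : Measure Ω}
    [IsProbabilityMeasure μ] {f : Ω → ℝ} {a : ℝ} (h0 : 0 ∈ interior (integrableExpSet f μ))
    (ha : ∫ x, f x ∂μ < a) :
    ∃ t > 0, t ∈ integrableExpSet f μ ∧ Real.exp (-t * a) * mgf f μ t < 1 := by
  have hderiv : HasDerivAt (fun t ↦ Real.exp (-t * a) * mgf f μ t) (∫ x, f x ∂μ - a) 0 := by
    have hexp : HasDerivAt (fun t : ℝ ↦ Real.exp (-t * a)) (-a) 0 := by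
      simpa using (((hasDerivAt_id (0 : ℝ)).neg.mul_const a).exp)
    refine (hexp.mul (hasDerivAt_mgf h0)).congr_deriv ?_
    simp only [neg_zero, zero_mul, Real.exp_zero, mgf_zero, mul_one, one_mul]
    ring
  have hslope := (hderiv.tendsto_slope.mono_left (nhdsGT_le_nhdsNE 0)).eventually_lt_const
    (sub_neg.2 ha)
  have hint : ∀ᶠ t in 𝓝[>] (0 : ℝ), t ∈ integrableExpSet f μ :=
    nhdsWithin_le_nhds (mem_interior_iff_mem_nhds.1 h0)
  obtain ⟨t, ht, htint, htpos⟩ := (hslope.and (hint.and self_mem_nhdsWithin)).exists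
  refine ⟨t, htpos, htint, ?_⟩
  rw [slope_def_field, sub_zero, div_lt_iff₀ htpos] at ht
  simpa using ht

lemma measureReal_pi_sum_ge_le_pow {Ω ι : Type*} [MeasurableSpace Ω] [Fintype ι] {μ : Measure Ω}
    [IsProbabilityMeasure μ] {f : Ω → ℝ} {t : ℝ} (ht : 0 ≤ t) (hint : t ∈ integrableExpSet f μ)
    (a : ℝ) :
    (Measure.pi fun _ : ι ↦ μ).real {x | Fintype.card ι * a ≤ ∑ i, f (x i)} ≤
      (Real.exp (-t * a) * mgf f μ t) ^ Fintype.card ι := by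
  have hprod (x : ι → Ω) : Real.exp (t * ∑ i, f (x i)) = ∏ i, Real.exp (t * f (x i)) := by
    rw [Finset.mul_sum, Real.exp_sum]
  have hbound := measure_ge_le_exp_mul_mgf (μ := Measure.pi fun _ : ι ↦ μ)
    (X := fun x ↦ ∑ i, f (x i)) (Fintype.card ι * a) ht (by
      simp only [hprod]
      exact Integrable.fintype_prod_dep fun _ ↦ hint)
  refine hbound.trans_eq ?_
  rw [mgf, mul_pow, ← Real.exp_nat_mul]
  simp only [hprod]
  rw [integral_fintype_prod_eq_prod (f := fun _ y ↦ Real.exp (t * f y)), Finset.prod_const,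
    Finset.card_univ, mgf]
  ring_nf

lemma exists_measureReal_pi_sum_ge_le_pow {Ω : Type*} [MeasurableSpace Ω] {μ : Measure Ω}
    [IsProbabilityMeasure μ] {f : Ω → ℝ} {a : ℝ} (h0 : 0 ∈ interior (integrableExpSet f μ))
    (ha : ∫ x, f x ∂μ < a) :
    ∃ ρ ∈ Set.Ico (0 : ℝ) 1, ∀ n : ℕ,
      (Measure.pi fun _ : Fin n ↦ μ).real {x | n * a ≤ ∑ i, f (x i)} ≤ ρ ^ n := by
  obtain ⟨t, ht, hint, hlt⟩ := exists_pos_exp_neg_mul_mgf_lt_one h0 ha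
  refine ⟨_, ⟨mul_nonneg (Real.exp_pos _).le mgf_nonneg, hlt⟩, fun n ↦ ?_⟩
  simpa using measureReal_pi_sum_ge_le_pow (ι := Fin n) ht.le hint a

lemma zero_mem_interior_integrableExpSet_sq_gaussianReal (v : ℝ≥0) (s : ℝ) :
    0 ∈ interior (integrableExpSet (fun x ↦ s * x ^ 2) (gaussianReal 0 v)) := by
  have hopen : IsOpen {t : ℝ | 2 * (t * s) * v < 1} := isOpen_lt (by fun_prop) (by fun_prop)
  refine interior_maximal (fun t ht ↦ ?_) hopen (by simp)
  simpa [integrableExpSet, mul_assoc] using integrable_exp_quadratic_gaussianReal ht 0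

lemma exists_gaussianPi_one_sum_sq_deviation_le_pow {ε : ℝ} (hε : 0 < ε) :
    ∃ ρ ∈ Set.Ico (0 : ℝ) 1, ∀ n : ℕ,
      (gaussianPi fun _ : Fin n ↦ 1).real {u | n * ε ≤ |∑ j, u j ^ 2 - n|} ≤ 2 * ρ ^ n := by
  have hmean (s : ℝ) : ∫ x, s * x ^ 2 ∂gaussianReal 0 1 = s := by
    rw [integral_const_mul, integral_sq_gaussianReal, NNReal.coe_one, mul_one]
  obtain ⟨ρ₁, ⟨hρ₁0, hρ₁⟩, hupper⟩ := exists_measureReal_pi_sum_ge_le_pow (a := 1 + ε)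
    (zero_mem_interior_integrableExpSet_sq_gaussianReal 1 1) (by rw [hmean]; linarith)
  obtain ⟨ρ₂, ⟨hρ₂0, hρ₂⟩, hlower⟩ := exists_measureReal_pi_sum_ge_le_pow (a := -1 + ε)
    (zero_mem_interior_integrableExpSet_sq_gaussianReal 1 (-1)) (by rw [hmean]; linarith)
  refine ⟨max ρ₁ ρ₂, ⟨hρ₁0.trans (le_max_left _ _), max_lt hρ₁ hρ₂⟩, fun n ↦ ?_⟩
  have hsubset : {u : Fin n → ℝ | n * ε ≤ |∑ j, u j ^ 2 - n|} ⊆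
      {u | n * (1 + ε) ≤ ∑ j, 1 * u j ^ 2} ∪ {u | n * (-1 + ε) ≤ ∑ j, -1 * u j ^ 2} := by
    intro u hu
    simp only [Set.mem_union, Set.mem_ofPred_eq, ← Finset.mul_sum] at hu ⊢
    rcases le_abs.1 hu with h | h
    · left; linarith
    · right; linarith
  calc _ ≤ _ := measureReal_mono hsubset
    _ ≤ _ := measureReal_union_le _ _
    _ ≤ ρ₁ ^ n + ρ₂ ^ n := add_le_add (hupper n) (hlower n)
    _ ≤ 2 * max ρ₁ ρ₂ ^ n := by
      rw [two_mul]
      gcongr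
      exacts [le_max_left _ _, le_max_right _ _]

end ChernoffBound

section ProductMeasure

variable {ι : Type*} [Fintype ι]

lemma lintegral_fintype_prod_eq_prod {E : ι → Type*} {mE : ∀ i, MeasurableSpace (E i)}
    {μ : ∀ i, Measure (E i)} [∀ i, IsProbabilityMeasure (μ i)] {f : ∀ i, E i → ℝ≥0∞}
    (hf : ∀ i, Measurable (f i)) :
    ∫⁻ x, ∏ i, f i (x i) ∂Measure.pi μ = ∏ i, ∫⁻ x, f i x ∂μ i := by
  refine (lintegral_prod_eq_prod_lintegral_of_indepFun Finset.univ
    (fun i (x : ∀ i, E i) ↦ f i (x i)) (iIndepFun_pi fun i ↦ (hf i).aemeasurable)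
    fun i ↦ (hf i).comp (measurable_pi_apply i)).trans ?_
  exact Finset.prod_congr rfl fun i _ ↦ (measurePreserving_eval μ i).lintegral_comp (hf i)

lemma pi_withDensity_prod {E : ι → Type*} {mE : ∀ i, MeasurableSpace (E i)}
    {μ ν : ∀ i, Measure (E i)} [∀ i, IsProbabilityMeasure (μ i)] [∀ i, SigmaFinite (ν i)]
    {f : ∀ i, E i → ℝ≥0∞} (hf : ∀ i, Measurable (f i)) (hν : ∀ i, (μ i).withDensity (f i) = ν i) :
    (Measure.pi μ).withDensity (fun x ↦ ∏ i, f i (x i)) = Measure.pi ν := by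
  refine (Measure.pi_eq fun t ht ↦ ?_).symm
  have hindicator (x : ∀ i, E i) : (Set.univ.pi t).indicator (fun x ↦ ∏ i, f i (x i)) x =
      ∏ i, (t i).indicator (f i) (x i) := by
    by_cases hx : ∀ i, x i ∈ t i
    · simp [Set.indicator_of_mem, Set.mem_pi, hx]
    · obtain ⟨i, hi⟩ := not_forall.1 hx
      rw [Set.indicator_of_notMem (by simpa [Set.mem_pi] using ⟨i, hi⟩),
        Finset.prod_eq_zero (Finset.mem_univ i) (Set.indicator_of_notMem hi _)]
  rw [withDensity_apply _ (MeasurableSet.univ_pi ht),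
    ← lintegral_indicator (MeasurableSet.univ_pi ht), lintegral_congr hindicator,
    lintegral_fintype_prod_eq_prod fun i ↦ (hf i).indicator (ht i)]
  refine Finset.prod_congr rfl fun i _ ↦ ?_
  rw [← hν i, withDensity_apply _ (ht i), lintegral_indicator (ht i)]

lemma map_standardize_pi_gaussianReal (b : ι → ℝ) {v : ι → ℝ≥0} (hv : ∀ j, v j ≠ 0) :
    (Measure.pi fun j ↦ gaussianReal (b j) (v j)).map (fun x j ↦ (x j - b j) / √(v j)) =
      gaussianPi fun _ ↦ 1 := by
  rw [Measure.pi_map_pi (f := fun j x ↦ (x - b j) / √(v j)) fun j ↦ by fun_prop]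
  congr 1 with j : 1
  have hcomp : (fun x ↦ (x - b j) / √(v j)) = (· / √(v j)) ∘ fun x : ℝ ↦ x - b j := rfl
  rw [hcomp, ← Measure.map_map (by fun_prop) (by fun_prop), gaussianReal_map_sub_const,
    gaussianReal_map_div_const, sub_self, zero_div]
  congr 1
  ext
  simp [hv j]

lemma pi_gaussianReal_sum_sub_sq_div_preimage (b : ι → ℝ) {v : ι → ℝ≥0} (hv : ∀ j, v j ≠ 0)
    {V : Set ℝ} (hV : MeasurableSet V) :
    (Measure.pi fun j ↦ gaussianReal (b j) (v j)) {x | ∑ j, (x j - b j) ^ 2 / v j ∈ V} =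
      (gaussianPi fun _ : ι ↦ 1) {u | ∑ j, u j ^ 2 ∈ V} := by
  have hmeas : MeasurableSet {u : ι → ℝ | ∑ j, u j ^ 2 ∈ V} :=
    hV.preimage (f := fun u : ι → ℝ ↦ ∑ j, u j ^ 2) (by fun_prop)
  rw [← map_standardize_pi_gaussianReal b hv, Measure.map_apply (by fun_prop) hmeas]
  simp [div_pow]

end ProductMeasure

section RandomCoding

lemma one_sub_pow_le {p q t : ℝ} (hp0 : 0 ≤ p) (hp1 : p ≤ 1) (hq1 : q ≤ 1)
    (hpq : p ≤ Real.exp t * q) (n : ℕ) :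
    (1 - q) ^ n ≤ 1 - p + Real.exp (-(n * Real.exp (-t))) := by
  have hq : Real.exp (-t) * p ≤ q := by rwa [Real.exp_neg, inv_mul_le_iff₀ (Real.exp_pos t)]
  calc (1 - q) ^ n
      ≤ Real.exp (-q) ^ n := by
        refine pow_le_pow_left₀ (by linarith) ?_ n
        linarith [Real.add_one_le_exp (-q)]
    _ ≤ Real.exp ((1 - p) • 0 + p • -(n * Real.exp (-t))) := by
        rw [← Real.exp_nat_mul, Real.exp_le_exp, smul_zero, zero_add, smul_eq_mul]
        nlinarith [mul_le_mul_of_nonneg_left hq (Nat.cast_nonneg' n : (0 : ℝ) ≤ n)]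
    _ ≤ (1 - p) • Real.exp 0 + p • Real.exp (-(n * Real.exp (-t))) :=
        convexOn_exp.2 trivial trivial (by linarith) hp0 (by ring)
    _ ≤ 1 - p + Real.exp (-(n * Real.exp (-t))) := by
        rw [Real.exp_zero, smul_eq_mul, smul_eq_mul, mul_one]
        gcongr
        exact mul_le_of_le_one_left (Real.exp_pos _).le hp1

lemma measure_compl_pow_le {𝒴 : Type*} [MeasurableSpace 𝒴] {Q : Measure 𝒴}
    [IsProbabilityMeasure Q] {f : 𝒴 → ℝ≥0∞} (hf : ∫⁻ y, f y ∂Q = 1) {G : Set 𝒴}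
    (hG : MeasurableSet G) {t : ℝ} (hfG : ∀ y ∈ G, f y ≤ ENNReal.ofReal (Real.exp t)) (n : ℕ) :
    Q Gᶜ ^ n ≤ ∫⁻ y in Gᶜ, f y ∂Q + ENNReal.ofReal (Real.exp (-(n * Real.exp (-t)))) := by
  set p := ∫⁻ y in G, f y ∂Q
  have hadd : p + ∫⁻ y in Gᶜ, f y ∂Q = 1 := by rw [lintegral_add_compl f hG, hf]
  have hp_top : p ≠ ∞ := ne_top_of_le_ne_top ENNReal.one_ne_top (le_self_add.trans_eq hadd)
  have hcompl : ∫⁻ y in Gᶜ, f y ∂Q = ENNReal.ofReal (1 - p.toReal) := by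
    rw [ENNReal.ofReal_sub _ ENNReal.toReal_nonneg, ENNReal.ofReal_one,
      ENNReal.ofReal_toReal hp_top, ← hadd, ENNReal.add_sub_cancel_left hp_top]
  have hp_one : p.toReal ≤ 1 := by
    simpa using ENNReal.toReal_mono ENNReal.one_ne_top (le_self_add.trans_eq hadd)
  have hp_le : p.toReal ≤ Real.exp t * Q.real G := by
    have h : p ≤ ENNReal.ofReal (Real.exp t) * Q G := by
      rw [← setLIntegral_const]
      exact setLIntegral_mono measurable_const hfG
    simpa [Measure.real, (Real.exp_pos t).le] using
      ENNReal.toReal_mono (ENNReal.mul_ne_top ENNReal.ofReal_ne_top (measure_ne_top _ _)) h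
  rw [hcompl, ← ENNReal.ofReal_add (by linarith) (Real.exp_pos _).le, ← ofReal_measureReal,
    ← ENNReal.ofReal_pow measureReal_nonneg, probReal_compl_eq_one_sub hG]
  exact ENNReal.ofReal_le_ofReal
    (one_sub_pow_le ENNReal.toReal_nonneg hp_one measureReal_le_one hp_le n)

lemma exists_forall_notMem_measure_le_lintegral {𝒳 𝒴 : Type*} [MeasurableSpace 𝒳]
    [MeasurableSpace 𝒴] (μ : Measure 𝒳) [SFinite μ] (Q : Measure 𝒴) [IsProbabilityMeasure Q]
    {G : Set (𝒳 × 𝒴)} (hG : MeasurableSet G) (n : ℕ) :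
    ∃ a : Fin n → 𝒴, μ {x | ∀ i, (x, a i) ∉ G} ≤ ∫⁻ x, Q {y | (x, y) ∈ G}ᶜ ^ n ∂μ := by
  set F : Set ((Fin n → 𝒴) × 𝒳) := {p | ∀ i, (p.2, p.1 i) ∉ G}
  have hF : MeasurableSet F := by
    simp only [F, Set.ofPred_forall]
    exact MeasurableSet.iInter fun i ↦ (hG.preimage (by fun_prop)).compl
  obtain ⟨a, ha⟩ := exists_le_lintegral (μ := Measure.pi fun _ : Fin n ↦ Q)
    (measurable_measure_prodMk_left (ν := μ) hF).aemeasurable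
  refine ⟨a, ha.trans_eq ?_⟩
  rw [← Measure.prod_apply hF, Measure.prod_apply_symm hF]
  refine lintegral_congr fun x ↦ ?_
  have hpi : (fun a ↦ (a, x)) ⁻¹' F = Set.univ.pi fun _ : Fin n ↦ {y | (x, y) ∈ G}ᶜ := by
    ext a
    simp [F, Set.mem_pi]
  rw [hpi, Measure.pi_pi, Finset.prod_const, Finset.card_univ, Fintype.card_fin]

lemma exists_forall_notMem_measure_le {𝒳 𝒴 : Type*} [MeasurableSpace 𝒳] [MeasurableSpace 𝒴]
    {μ : Measure 𝒳} [IsProbabilityMeasure μ] {Q : Measure 𝒴} [IsProbabilityMeasure Q]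
    {f : 𝒳 × 𝒴 → ℝ≥0∞} (hf : Measurable f) (hf_one : ∀ x, ∫⁻ y, f (x, y) ∂Q = 1)
    {G : Set (𝒳 × 𝒴)} (hG : MeasurableSet G) {t : ℝ}
    (hfG : ∀ p ∈ G, f p ≤ ENNReal.ofReal (Real.exp t)) (n : ℕ) :
    ∃ a : Fin n → 𝒴, μ {x | ∀ i, (x, a i) ∉ G} ≤
      ∫⁻ p in Gᶜ, f p ∂μ.prod Q + ENNReal.ofReal (Real.exp (-(n * Real.exp (-t)))) := by
  obtain ⟨a, ha⟩ := exists_forall_notMem_measure_le_lintegral μ Q hG n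
  refine ⟨a, ha.trans ?_⟩
  have hslice (x : 𝒳) : MeasurableSet {y | (x, y) ∈ G} := hG.preimage (by fun_prop)
  calc ∫⁻ x, Q {y | (x, y) ∈ G}ᶜ ^ n ∂μ
      ≤ ∫⁻ x, (∫⁻ y in {y | (x, y) ∈ G}ᶜ, f (x, y) ∂Q +
          ENNReal.ofReal (Real.exp (-(n * Real.exp (-t))))) ∂μ :=
        lintegral_mono fun x ↦ measure_compl_pow_le (hf_one x) (hslice x) (fun y ↦ hfG (x, y)) n
    _ = _ := by
        rw [lintegral_add_right _ measurable_const, lintegral_const, measure_univ, mul_one,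
          ← lintegral_indicator hG.compl, lintegral_prod _ (hf.indicator hG.compl).aemeasurable]
        congr 1
        refine lintegral_congr fun x ↦ ?_
        rw [← lintegral_indicator (hslice x).compl]
        rfl

end RandomCoding

section GaussianRandomCode

variable {ι : Type*} [Fintype ι]

/-- The density, with respect to the independent product of source and codeword, of the backward
test channel: codeword `y` with variances `v j - θ` and source `x` equal to `y` plus independent
noise of variance `θ`. -/
noncomputable def testChannelDensity (v : ι → ℝ≥0) (θ : ℝ≥0) (p : (ι → ℝ) × (ι → ℝ)) : ℝ≥0∞ :=
  ∏ j, ENNReal.ofReal (gaussianTilt (v j) θ (p.1 j) (p.2 j))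

@[fun_prop]
lemma measurable_testChannelDensity (v : ι → ℝ≥0) (θ : ℝ≥0) :
    Measurable (testChannelDensity v θ) := by
  unfold testChannelDensity gaussianTilt
  fun_prop

variable {v : ι → ℝ≥0} {θ : ℝ≥0}

lemma lintegral_testChannelDensity_right (hθ : 0 < θ) (hθv : ∀ j, θ ≤ v j) (x : ι → ℝ) :
    ∫⁻ y, testChannelDensity v θ (x, y) ∂gaussianPi (fun j ↦ v j - θ) = 1 := by
  refine (lintegral_fintype_prod_eq_prod
    (f := fun j a ↦ ENNReal.ofReal (gaussianTilt (v j) θ (x j) a)) fun j ↦ ?_).trans ?_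
  · unfold gaussianTilt; fun_prop
  · exact Finset.prod_eq_one fun j _ ↦ lintegral_gaussianTilt_right hθ (hθv j) (x j)

lemma gaussianPi_withDensity_testChannelDensity (hv : ∀ j, 0 < v j) (hθ : 0 < θ) (y : ι → ℝ) :
    (gaussianPi v).withDensity (fun x ↦ testChannelDensity v θ (x, y)) =
      Measure.pi fun j ↦ gaussianReal (y j) θ :=
  pi_withDensity_prod (f := fun j x ↦ ENNReal.ofReal (gaussianTilt (v j) θ x (y j)))
    (fun j ↦ by unfold gaussianTilt; fun_prop)
    fun j ↦ gaussianReal_withDensity_gaussianTilt (hv j) hθ (y j)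

lemma testChannelDensity_le_ofReal_exp (hv : ∀ j, 0 < v j) (hθ : 0 < θ) {x y : ι → ℝ} {r s : ℝ}
    (hx : ∑ j, x j ^ 2 / v j ≤ r) (hxy : s ≤ ∑ j, (x j - y j) ^ 2 / θ) :
    testChannelDensity v θ (x, y) ≤
      ENNReal.ofReal (Real.exp ((∑ j, Real.log (v j / θ)) / 2 + (r - s) / 2)) := by
  rw [testChannelDensity, ← ENNReal.ofReal_prod_of_nonneg fun _ _ ↦ gaussianTilt_nonneg _ _ _ _,
    prod_gaussianTilt_eq_exp hv fun _ ↦ hθ]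
  refine ENNReal.ofReal_le_ofReal (Real.exp_le_exp.2 ?_)
  have hx' : ∑ j, x j ^ 2 / (2 * v j) = (∑ j, x j ^ 2 / v j) / 2 := by
    rw [Finset.sum_div]
    exact Finset.sum_congr rfl fun j _ ↦ by rw [div_div, mul_comm]
  have hxy' : ∑ j, (x j - y j) ^ 2 / (2 * θ) = (∑ j, (x j - y j) ^ 2 / θ) / 2 := by
    rw [Finset.sum_div]
    exact Finset.sum_congr rfl fun j _ ↦ by rw [div_div, mul_comm]
  rw [Finset.sum_add_distrib, ← Finset.sum_div, hx', hxy']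
  linarith

lemma gaussianPi_sum_sq_div_preimage (hv : ∀ j, v j ≠ 0) {V : Set ℝ} (hV : MeasurableSet V) :
    (gaussianPi v) {x | ∑ j, x j ^ 2 / v j ∈ V} =
      (gaussianPi fun _ : ι ↦ 1) {u | ∑ j, u j ^ 2 ∈ V} := by
  simpa using pi_gaussianReal_sum_sub_sq_div_preimage 0 hv hV

lemma lintegral_testChannelDensity_source (hθ : 0 < θ) (hθv : ∀ j, θ ≤ v j) {V : Set ℝ}
    (hV : MeasurableSet V) :
    ∫⁻ p in {p | ∑ j, p.1 j ^ 2 / v j ∈ V}, testChannelDensity v θ p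
        ∂(gaussianPi v).prod (gaussianPi fun j ↦ v j - θ) =
      (gaussianPi fun _ : ι ↦ 1) {u | ∑ j, u j ^ 2 ∈ V} := by
  have hprod : {p : (ι → ℝ) × (ι → ℝ) | ∑ j, p.1 j ^ 2 / v j ∈ V} =
      {x : ι → ℝ | ∑ j, x j ^ 2 / (v j : ℝ) ∈ V} ×ˢ Set.univ := by
    ext; simp
  rw [hprod, setLIntegral_prod _ (by fun_prop)]
  simp only [Measure.restrict_univ, lintegral_testChannelDensity_right hθ hθv, setLIntegral_one]
  exact gaussianPi_sum_sq_div_preimage (fun j ↦ (hθ.trans_le (hθv j)).ne') hV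

lemma lintegral_testChannelDensity_noise (hv : ∀ j, 0 < v j) (hθ : 0 < θ) {V : Set ℝ}
    (hV : MeasurableSet V) (Q : Measure (ι → ℝ)) [IsProbabilityMeasure Q] :
    ∫⁻ p in {p | ∑ j, (p.1 j - p.2 j) ^ 2 / θ ∈ V}, testChannelDensity v θ p
        ∂(gaussianPi v).prod Q =
      (gaussianPi fun _ : ι ↦ 1) {u | ∑ j, u j ^ 2 ∈ V} := by
  have hA : MeasurableSet {p : (ι → ℝ) × (ι → ℝ) | ∑ j, (p.1 j - p.2 j) ^ 2 / θ ∈ V} :=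
    hV.preimage (f := fun p : (ι → ℝ) × (ι → ℝ) ↦ ∑ j, (p.1 j - p.2 j) ^ 2 / θ) (by fun_prop)
  have hAy (y : ι → ℝ) : MeasurableSet {x : ι → ℝ | ∑ j, (x j - y j) ^ 2 / θ ∈ V} :=
    hA.preimage (f := fun x ↦ (x, y)) (by fun_prop)
  rw [← lintegral_indicator hA,
    lintegral_prod_symm _ ((measurable_testChannelDensity v θ).indicator hA).aemeasurable]
  have hslice (y : ι → ℝ) :
      ∫⁻ x, {p : (ι → ℝ) × (ι → ℝ) | ∑ j, (p.1 j - p.2 j) ^ 2 / θ ∈ V}.indicator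
        (testChannelDensity v θ) (x, y) ∂gaussianPi v =
      (gaussianPi fun _ : ι ↦ 1) {u | ∑ j, u j ^ 2 ∈ V} := by
    rw [← pi_gaussianReal_sum_sub_sq_div_preimage y (fun _ ↦ hθ.ne') hV,
      ← gaussianPi_withDensity_testChannelDensity hv hθ y, withDensity_apply _ (hAy y),
      ← lintegral_indicator (hAy y)]
    rfl
  simp only [hslice, lintegral_const, measure_univ, mul_one]

/-- The typical set of the random coding argument. Both constraints are needed to bound the
density there: it grows with `∑ x²/v` and decreases with the distortion. -/
def typicalSet (v : ι → ℝ≥0) (θ : ℝ≥0) (ε : ℝ) : Set ((ι → ℝ) × (ι → ℝ)) :=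
  {p | |∑ j, p.1 j ^ 2 / v j - Fintype.card ι| < Fintype.card ι * ε ∧
    |∑ j, (p.1 j - p.2 j) ^ 2 / θ - Fintype.card ι| < Fintype.card ι * ε}

lemma measurableSet_typicalSet (v : ι → ℝ≥0) (θ : ℝ≥0) (ε : ℝ) :
    MeasurableSet (typicalSet v θ ε) := by
  unfold typicalSet
  rw [Set.ofPred_and]
  exact (measurableSet_lt (by fun_prop) (by fun_prop)).inter
    (measurableSet_lt (by fun_prop) (by fun_prop))

lemma testChannelDensity_le_of_mem_typicalSet (hv : ∀ j, 0 < v j) (hθ : 0 < θ) {ε : ℝ}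
    {p : (ι → ℝ) × (ι → ℝ)} (hp : p ∈ typicalSet v θ ε) :
    testChannelDensity v θ p ≤ ENNReal.ofReal
      (Real.exp ((∑ j, Real.log (v j / θ)) / 2 + Fintype.card ι * ε)) := by
  obtain ⟨hsource, hnoise⟩ := hp
  have h := testChannelDensity_le_ofReal_exp (x := p.1) (y := p.2) hv hθ
    (r := Fintype.card ι * (1 + ε)) (s := Fintype.card ι * (1 - ε))
    (by linarith [(abs_lt.1 hsource).2]) (by linarith [(abs_lt.1 hnoise).1])
  have hgap : (Fintype.card ι * (1 + ε) - Fintype.card ι * (1 - ε)) / 2 = Fintype.card ι * ε := by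
    ring
  rwa [hgap] at h

lemma lintegral_compl_typicalSet_le (hθ : 0 < θ) (hθv : ∀ j, θ ≤ v j) (ε : ℝ) :
    ∫⁻ p in (typicalSet v θ ε)ᶜ, testChannelDensity v θ p
        ∂(gaussianPi v).prod (gaussianPi fun j ↦ v j - θ) ≤
      2 * (gaussianPi fun _ : ι ↦ 1)
        {u | Fintype.card ι * ε ≤ |∑ j, u j ^ 2 - Fintype.card ι|} := by
  set V : Set ℝ := {r | Fintype.card ι * ε ≤ |r - Fintype.card ι|}
  have hV : MeasurableSet V := measurableSet_le (by fun_prop) (by fun_prop)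
  have hcompl : (typicalSet v θ ε)ᶜ = {p | ∑ j, p.1 j ^ 2 / (v j : ℝ) ∈ V} ∪
      {p | ∑ j, (p.1 j - p.2 j) ^ 2 / (θ : ℝ) ∈ V} := by
    ext p
    simp only [typicalSet, V, Set.mem_compl_iff, Set.mem_ofPred_eq, Set.mem_union, not_and_or,
      not_lt]
  rw [hcompl, two_mul]
  refine (lintegral_union_le _ _ _).trans_eq ?_
  rw [lintegral_testChannelDensity_source hθ hθv hV,
    lintegral_testChannelDensity_noise (fun j ↦ hθ.trans_le (hθv j)) hθ hV]
  rfl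

/-- Shannon's random coding theorem for independent Gaussian sources, with an error probability
that is exponentially small in the number of coordinates. -/
lemma exists_gaussianPi_code {ε : ℝ} (hε : 0 < ε) :
    ∃ ρ ∈ Set.Ico (0 : ℝ) 1, ∀ (D : ℕ) (v : Fin D → ℝ≥0) (θ : ℝ≥0), 0 < θ → (∀ j, θ ≤ v j) →
      ∀ n : ℕ, ∃ a : Fin n → Fin D → ℝ,
        (gaussianPi v).real {x | ∀ i, θ * (D * (1 + ε)) < ∑ j, (x j - a i j) ^ 2} ≤
          4 * ρ ^ D +
            Real.exp (-(n * Real.exp (-((∑ j, Real.log (v j / θ)) / 2 + D * ε)))) := by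
  obtain ⟨ρ, hρ, hdev⟩ := exists_gaussianPi_one_sum_sq_deviation_le_pow hε
  refine ⟨ρ, hρ, fun D v θ hθ hθv n ↦ ?_⟩
  have hv (j : Fin D) : 0 < v j := hθ.trans_le (hθv j)
  obtain ⟨a, ha⟩ := exists_forall_notMem_measure_le (μ := gaussianPi v)
    (measurable_testChannelDensity v θ) (lintegral_testChannelDensity_right hθ hθv)
    (measurableSet_typicalSet v θ ε)
    (fun p hp ↦ testChannelDensity_le_of_mem_typicalSet hv hθ hp) n
  rw [Fintype.card_fin] at ha
  refine ⟨a, ENNReal.toReal_le_of_le_ofReal ?_ ((measure_mono fun x hx i hi ↦ ?_).trans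
    (ha.trans ?_))⟩
  · have := hρ.1
    positivity
  · have hlt : ∑ j, (x j - a i j) ^ 2 / (θ : ℝ) < D * (1 + ε) := by
      have := (abs_lt.1 hi.2).2
      rw [Fintype.card_fin] at this
      linarith
    rw [← Finset.sum_div, div_lt_iff₀' (NNReal.coe_pos.2 hθ)] at hlt
    exact (hx i).not_gt hlt
  · rw [ENNReal.ofReal_add (by have := hρ.1; positivity) (Real.exp_pos _).le]
    gcongr
    refine (lintegral_compl_typicalSet_le hθ hθv ε).trans ?_
    have h := ENNReal.ofReal_le_ofReal (hdev D)
    rw [ofReal_measureReal] at h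
    rw [Fintype.card_fin, show (4 : ℝ) * ρ ^ D = 2 * (2 * ρ ^ D) by ring,
      ENNReal.ofReal_mul zero_le_two, ENNReal.ofReal_ofNat]
    gcongr

end GaussianRandomCode

section CodeDistortion

lemma setIntegral_le_sqrt_mul_sqrt_measureReal {Ω : Type*} [MeasurableSpace Ω] {μ : Measure Ω}
    [IsFiniteMeasure μ] {f : Ω → ℝ} (hf0 : 0 ≤ f) (hf : MemLp f 2 μ) {W : Set Ω}
    (hW : MeasurableSet W) :
    ∫ x in W, f x ∂μ ≤ √(∫ x, f x ^ 2 ∂μ) * √(μ.real W) := by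
  have h := integral_mul_le_Lp_mul_Lq_of_nonneg Real.HolderConjugate.two_two (ae_of_all μ hf0)
    (ae_of_all μ fun x ↦ Set.indicator_nonneg (s := W) (fun _ _ ↦ zero_le_one' ℝ) x)
    (by simpa using hf) (memLp_indicator_const _ hW (1 : ℝ) (by simp))
  have hmul (x : Ω) : f x * W.indicator (fun _ ↦ 1) x = W.indicator f x := by
    by_cases hx : x ∈ W <;> simp [hx]
  have hsq (x : Ω) : W.indicator (fun _ ↦ (1 : ℝ)) x ^ (2 : ℝ) = W.indicator 1 x := by
    by_cases hx : x ∈ W <;> simp [hx]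
  simp only [hmul, hsq, Real.rpow_ofNat] at h
  rwa [integral_indicator hW, integral_indicator_one hW, ← Real.sqrt_eq_rpow,
    ← Real.sqrt_eq_rpow] at h

lemma integral_pow_four_gaussianReal (v : ℝ≥0) :
    ∫ x, x ^ 4 ∂gaussianReal 0 v = v ^ 2 * ∫ x, x ^ 4 ∂gaussianReal 0 1 := by
  have hmap : (gaussianReal 0 1).map (√v * ·) = gaussianReal 0 v := by
    rw [gaussianReal_map_const_mul]
    congr 1
    · simp
    · ext; simp
  rw [← hmap, integral_map (by fun_prop) (by fun_prop), ← integral_const_mul]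
  refine integral_congr_ae (ae_of_all _ fun x ↦ ?_)
  have h : √(v : ℝ) ^ 4 = v ^ 2 := by
    rw [show 4 = 2 * 2 from rfl, pow_mul, Real.sq_sqrt v.coe_nonneg]
  simp only [mul_pow, h]

variable {ι : Type*} [Fintype ι]

lemma integrable_pow_four_eval_gaussianPi (v : ι → ℝ≥0) (j : ι) :
    Integrable (fun x ↦ x j ^ 4) (gaussianPi v) :=
  integrable_comp_eval (μ := fun j ↦ gaussianReal 0 (v j)) (i := j) (f := fun x ↦ x ^ 4) <| by
    simpa [(show Even 4 by decide).pow_abs] using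
      (memLp_id_gaussianReal' (μ := 0) (v := v j) 4 (by simp)).integrable_norm_pow'

lemma memLp_sum_sq_gaussianPi (v : ι → ℝ≥0) :
    MemLp (fun x ↦ ∑ j, x j ^ 2) 2 (gaussianPi v) :=
  memLp_finsetSum _ fun j _ ↦ (memLp_two_iff_integrable_sq
    (Measurable.aestronglyMeasurable (by fun_prop))).2 <| by
    simpa only [← pow_mul] using integrable_pow_four_eval_gaussianPi v j

lemma integral_sum_sq_sq_gaussianPi_le {v : ι → ℝ≥0} {L : ℝ≥0} (hvL : ∀ j, v j ≤ L) :
    ∫ x, (∑ j, x j ^ 2) ^ 2 ∂gaussianPi v ≤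
      (L * Fintype.card ι) ^ 2 * ∫ x, x ^ 4 ∂gaussianReal 0 1 := by
  have hfour (j : ι) : ∫ x, x j ^ 4 ∂gaussianPi v = v j ^ 2 * ∫ x, x ^ 4 ∂gaussianReal 0 1 := by
    rw [← integral_pow_four_gaussianReal]
    exact integral_comp_eval (μ := fun j ↦ gaussianReal 0 (v j)) (i := j)
      (f := fun x : ℝ ↦ x ^ 4) (by fun_prop)
  have hint := integrable_finsetSum Finset.univ fun j _ ↦ integrable_pow_four_eval_gaussianPi v j
  calc ∫ x, (∑ j, x j ^ 2) ^ 2 ∂gaussianPi v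
      ≤ ∫ x, Fintype.card ι * ∑ j, x j ^ 4 ∂gaussianPi v := by
        refine integral_mono (memLp_sum_sq_gaussianPi v).integrable_sq (hint.const_mul _) fun x ↦ ?_
        refine sq_sum_le_card_mul_sum_sq.trans_eq ?_
        exact congrArg _ (Finset.sum_congr rfl fun j _ ↦ by ring)
    _ = Fintype.card ι * ∑ j, v j ^ 2 * ∫ x, x ^ 4 ∂gaussianReal 0 1 := by
        rw [integral_const_mul,
          integral_finsetSum _ fun j _ ↦ integrable_pow_four_eval_gaussianPi v j]
        simp only [hfour]
    _ ≤ Fintype.card ι * ∑ _j : ι, L ^ 2 * ∫ x, x ^ 4 ∂gaussianReal 0 1 := by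
        gcongr with j
        exact hvL j
    _ = (L * Fintype.card ι) ^ 2 * ∫ x, x ^ 4 ∂gaussianReal 0 1 := by
        rw [Finset.sum_const, Finset.card_univ, nsmul_eq_mul]
        ring

/-- Adding the codeword `0` bounds the distortion by `∑ x²` where the code misses. -/
lemma integral_inf'_insert_zero_le (v : ι → ℝ≥0) {L : ℝ≥0} (hvL : ∀ j, v j ≤ L)
    [DecidableEq (ι → ℝ)] (β : Finset (ι → ℝ)) {r : ℝ} (hr : 0 ≤ r) :
    ∫ x, (insert 0 β).inf' (β.insert_nonempty 0) (fun a ↦ ∑ j, (x j - a j) ^ 2) ∂gaussianPi v ≤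
      r + L * Fintype.card ι * √(∫ x, x ^ 4 ∂gaussianReal 0 1) *
        √((gaussianPi v).real {x | ∀ a ∈ β, r < ∑ j, (x j - a j) ^ 2}) := by
  set W : Set (ι → ℝ) := {x | ∀ a ∈ β, r < ∑ j, (x j - a j) ^ 2}
  have hW : MeasurableSet W := by
    simp only [W, Set.ofPred_forall]
    exact .biInter β.countable_toSet fun a _ ↦ measurableSet_lt (by fun_prop) (by fun_prop)
  have hL2 := memLp_sum_sq_gaussianPi v
  have hint : Integrable (W.indicator fun x ↦ ∑ j, x j ^ 2) (gaussianPi v) :=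
    (hL2.integrable one_le_two).indicator hW
  have hpt (x : ι → ℝ) : (insert 0 β).inf' (β.insert_nonempty 0) (fun a ↦ ∑ j, (x j - a j) ^ 2) ≤
      r + W.indicator (fun x ↦ ∑ j, x j ^ 2) x := by
    by_cases hx : x ∈ W
    · rw [Set.indicator_of_mem hx]
      refine (Finset.inf'_le _ (Finset.mem_insert_self 0 β)).trans ?_
      simpa using hr
    · simp only [W, Set.mem_ofPred_eq, not_forall, not_lt] at hx
      obtain ⟨a, ha, hxa⟩ := hx
      exact (Finset.inf'_le _ (Finset.mem_insert_of_mem ha)).trans <| hxa.trans <|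
        le_add_of_nonneg_right <| Set.indicator_nonneg (fun x _ ↦ by positivity) x
  calc _ ≤ ∫ x, (r + W.indicator (fun x ↦ ∑ j, x j ^ 2) x) ∂gaussianPi v :=
        integral_mono (integrable_finset_inf' _ fun a _ ↦ integrable_sum_sub_sq_gaussianPi v a)
          ((integrable_const r).add hint) hpt
    _ = r + ∫ x in W, ∑ j, x j ^ 2 ∂gaussianPi v := by
        rw [integral_add (integrable_const r) hint, integral_const, probReal_univ, one_smul,
          integral_indicator hW]
    _ ≤ r + √(∫ x, (∑ j, x j ^ 2) ^ 2 ∂gaussianPi v) * √((gaussianPi v).real W) := by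
        gcongr
        exact setIntegral_le_sqrt_mul_sqrt_measureReal (fun x ↦ by positivity) hL2 hW
    _ ≤ _ := by
        gcongr
        refine (Real.sqrt_le_sqrt (integral_sum_sq_sq_gaussianPi_le hvL)).trans_eq ?_
        rw [Real.sqrt_mul (by positivity), Real.sqrt_sq (by positivity)]

open scoped Classical in
lemma exists_gaussianPi_codebook {ε : ℝ} (hε : 0 < ε) :
    ∃ ρ ∈ Set.Ico (0 : ℝ) 1, ∀ (D : ℕ) (v : Fin D → ℝ≥0) (θ L : ℝ≥0), 0 < θ →
      (∀ j, θ ≤ v j) → (∀ j, v j ≤ L) → ∀ n : ℕ,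
        ∃ (α : Finset (Fin D → ℝ)) (hα : α.Nonempty), α.card ≤ n + 1 ∧
          ∫ x, α.inf' hα (fun a ↦ ∑ j, (x j - a j) ^ 2) ∂gaussianPi v ≤
            θ * (D * (1 + ε)) + L * D * √(∫ x, x ^ 4 ∂gaussianReal 0 1) *
              √(4 * ρ ^ D +
                Real.exp (-(n * Real.exp (-((∑ j, Real.log (v j / θ)) / 2 + D * ε))))) := by
  obtain ⟨ρ, hρ, hcode⟩ := exists_gaussianPi_code hε
  refine ⟨ρ, hρ, fun D v θ L hθ hθv hvL n ↦ ?_⟩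
  obtain ⟨a, ha⟩ := hcode D v θ hθ hθv n
  refine ⟨insert 0 (Finset.univ.image a), Finset.insert_nonempty _ _, ?_, ?_⟩
  · refine (Finset.card_insert_le _ _).trans (Nat.succ_le_succ ?_)
    simpa using Finset.card_image_le (s := Finset.univ) (f := a)
  · refine (integral_inf'_insert_zero_le v hvL _ (r := θ * (D * (1 + ε))) (by positivity)).trans ?_
    rw [Fintype.card_fin]
    gcongr
    simpa using ha

end CodeDistortion

section QuantErr

variable {Ω H : Type*} [MeasurableSpace Ω] {P : Measure Ω} [NormedAddCommGroup H] {X : Ω → H}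
  {n : ℕ}

lemma integrable_norm_sub_const_sq [IsFiniteMeasure P] (hX : MemLp X 2 P) (a : H) :
    Integrable (fun ω ↦ ‖X ω - a‖ ^ 2) P :=
  (hX.sub (memLp_const a)).integrable_norm_pow two_ne_zero

lemma quantErr_nonneg : 0 ≤ quantErr P X n :=
  Real.sInf_nonneg fun _ ⟨_, _, _, hr⟩ ↦ hr ▸ Real.sqrt_nonneg _

lemma quantErr_sq_le {α : Finset H} (hα : α.Nonempty) (hn : α.card ≤ n) :
    quantErr P X n ^ 2 ≤ ∫ ω, α.inf' hα (fun a ↦ ‖X ω - a‖ ^ 2) ∂P := by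
  have hbdd : BddBelow {r : ℝ | ∃ α : Finset H, ∃ hα : α.Nonempty, α.card ≤ n ∧
      r = √(∫ ω, α.inf' hα (fun a ↦ ‖X ω - a‖ ^ 2) ∂P)} :=
    ⟨0, fun _ ⟨_, _, _, hr⟩ ↦ hr ▸ Real.sqrt_nonneg _⟩
  have hint : 0 ≤ ∫ ω, α.inf' hα (fun a ↦ ‖X ω - a‖ ^ 2) ∂P :=
    integral_nonneg fun ω ↦ Finset.le_inf' _ _ fun a _ ↦ sq_nonneg _
  exact (Real.le_sqrt quantErr_nonneg hint).1 (csInf_le hbdd ⟨α, hα, hn, rfl⟩)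

lemma le_quantErr_sq (hn : 1 ≤ n) {r : ℝ}
    (h : ∀ (α : Finset H) (hα : α.Nonempty), α.card ≤ n →
      r ≤ ∫ ω, α.inf' hα (fun a ↦ ‖X ω - a‖ ^ 2) ∂P) :
    r ≤ quantErr P X n ^ 2 := by
  refine (Real.sqrt_le_left quantErr_nonneg).1 (le_csInf ?_ ?_)
  · exact ⟨_, {0}, Finset.singleton_nonempty 0, by simpa using hn, rfl⟩
  · rintro _ ⟨α, hα, hcard, rfl⟩
    exact Real.sqrt_le_sqrt (h α hα hcard)

end QuantErr

section BrownianSpectrum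

/-- The variances `c / j²`, `j ≥ 1`, shifted to start at index `0`. -/
noncomputable def brownianVariance (c : ℝ≥0) (j : ℕ) : ℝ≥0 := c / (j + 1) ^ 2

lemma coe_brownianVariance (c : ℝ≥0) (j : ℕ) :
    (brownianVariance c j : ℝ) = c / ((j : ℝ) + 1) ^ 2 := by
  simp [brownianVariance]

lemma brownianVariance_pos {c : ℝ≥0} (hc : 0 < c) (j : ℕ) : 0 < brownianVariance c j := by
  unfold brownianVariance; positivity

lemma antitone_brownianVariance (c : ℝ≥0) : Antitone (brownianVariance c) := fun i j hij ↦ by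
  unfold brownianVariance; gcongr

lemma brownianVariance_div_pred {c : ℝ≥0} (hc : 0 < c) {d : ℕ} (hd : 0 < d) (j : ℕ) :
    (brownianVariance c j : ℝ) / brownianVariance c (d - 1) = (d / ((j : ℝ) + 1)) ^ 2 := by
  have : (0 : ℝ) < c := hc
  have : (0 : ℝ) < d := Nat.cast_pos.2 hd
  rw [coe_brownianVariance, coe_brownianVariance, Nat.cast_pred hd, sub_add_cancel]
  field_simp

/-- The spectral data of Brownian-type processes that determine their quantization asymptotics:
up to one direction `e 0`, about which only a moment is known, the coordinates of `X` in the
orthonormal family `e` are independent centered Gaussians with variances `c / j²`, and these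
coordinates exhaust `X` (the last field, where `∑ c / j² = c π² / 6`). -/
structure HasBrownianSpectrum {Ω H : Type*} [MeasurableSpace Ω] [NormedAddCommGroup H]
    [InnerProductSpace ℝ H] (P : Measure Ω) (X : Ω → H) (e : ℕ → H) (c : ℝ≥0) : Prop where
  orthonormal : Orthonormal ℝ e
  memLp : MemLp X 2 P
  memLp_inner_zero : MemLp (fun ω ↦ inner ℝ (e 0) (X ω)) 4 P
  map_inner_succ (N : ℕ) : P.map (fun ω (j : Fin N) ↦ inner ℝ (e (j + 1)) (X ω)) =
    gaussianPi fun j : Fin N ↦ brownianVariance c j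
  integral_norm_sq_le :
    ∫ ω, ‖X ω‖ ^ 2 ∂P ≤ ∫ ω, inner ℝ (e 0) (X ω) ^ 2 ∂P + c * (Real.pi ^ 2 / 6)

variable {Ω H : Type*} [MeasurableSpace Ω] [NormedAddCommGroup H] [InnerProductSpace ℝ H]
  {P : Measure Ω} {X : Ω → H} {e : ℕ → H} {c : ℝ≥0}

namespace HasBrownianSpectrum

lemma aemeasurable_inner (h : HasBrownianSpectrum P X e c) (j : ℕ) :
    AEMeasurable (fun ω ↦ inner ℝ (e j) (X ω)) P :=
  (h.memLp.aestronglyMeasurable.const_inner).aemeasurable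

lemma aemeasurable_inner_succ (h : HasBrownianSpectrum P X e c) (N : ℕ) :
    AEMeasurable (fun ω (j : Fin N) ↦ inner ℝ (e (j + 1)) (X ω)) P :=
  aemeasurable_pi_lambda _ fun j ↦ h.aemeasurable_inner (j + 1)

lemma integral_gaussianPi_inf'_le [IsFiniteMeasure P] (h : HasBrownianSpectrum P X e c)
    {α : Finset H} (hα : α.Nonempty) (N : ℕ) :
    ∫ x, α.inf' hα (fun a ↦ ∑ j, (x j - inner ℝ (e (j + 1)) a) ^ 2)
        ∂gaussianPi (fun j : Fin N ↦ brownianVariance c j) ≤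
      ∫ ω, α.inf' hα (fun a ↦ ‖X ω - a‖ ^ 2) ∂P := by
  have hcont : Continuous fun x : Fin N → ℝ ↦
      α.inf' hα (fun a ↦ ∑ j, (x j - inner ℝ (e (j + 1)) a) ^ 2) :=
    Continuous.finset_inf'_apply hα fun a _ ↦ by fun_prop
  have horth : Orthonormal ℝ fun j : Fin N ↦ e (j + 1) :=
    h.orthonormal.comp _ fun i j hij ↦ Fin.ext (Nat.succ_injective hij)
  rw [← h.map_inner_succ, integral_map (h.aemeasurable_inner_succ N) hcont.aestronglyMeasurable]
  refine integral_mono_of_nonneg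
    (ae_of_all _ fun ω ↦ Finset.le_inf' _ _ fun a _ ↦ Finset.sum_nonneg fun j _ ↦ sq_nonneg _)
    (integrable_finset_inf' hα fun a _ ↦ integrable_norm_sub_const_sq h.memLp a)
    (ae_of_all _ fun ω ↦ Finset.le_inf' _ _ fun a ha ↦ (Finset.inf'_le _ ha).trans ?_)
  simpa only [inner_sub_right, Real.norm_eq_abs, sq_abs] using
    horth.sum_inner_products_le (s := Finset.univ) (X ω - a)

end HasBrownianSpectrum

/-- Half of `∑ j < d, log (v j / θ)` for the variances `v j = c / (j + 1)²` and the water level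
`θ = c / d²`. -/
noncomputable def logRatioSum (d : ℕ) : ℝ := ∑ j ∈ Finset.range d, Real.log (d / ((j : ℝ) + 1))

lemma logRatioSum_eq_sub_log_factorial (d : ℕ) :
    logRatioSum d = d * Real.log d - Real.log d.factorial := by
  rcases Nat.eq_zero_or_pos d with rfl | hd
  · simp [logRatioSum]
  have hlog (j : ℕ) : Real.log (d / ((j : ℝ) + 1)) = Real.log d - Real.log (j + 1 : ℕ) := by
    rw [Real.log_div (by positivity) (by positivity), Nat.cast_succ]
  simp only [logRatioSum, hlog, Finset.sum_sub_distrib, Finset.sum_const, Finset.card_range,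
    nsmul_eq_mul]
  rw [← Real.log_prod fun j _ ↦ by positivity, ← Nat.cast_prod,
    Finset.prod_range_add_one_eq_factorial]

lemma logRatioSum_le (d : ℕ) : logRatioSum d ≤ d := by
  rcases Nat.eq_zero_or_pos d with rfl | hd
  · simp [logRatioSum]
  rw [logRatioSum_eq_sub_log_factorial, ← Real.log_pow,
    ← Real.log_div (by positivity) (by positivity)]
  exact (Real.log_le_iff_le_exp (by positivity)).2
    (Real.pow_div_factorial_le_exp d (Nat.cast_nonneg d) d)

lemma tendsto_logRatioSum_div : Tendsto (fun d : ℕ ↦ logRatioSum d / d) atTop (𝓝 1) := by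
  have hstirling : Tendsto (fun d : ℕ ↦ Real.log (Stirling.stirlingSeq d) / d) atTop (𝓝 0) :=
    ((Stirling.tendsto_stirlingSeq_sqrt_pi.log (by positivity)).div_atTop
      tendsto_natCast_atTop_atTop)
  have hlog : Tendsto (fun d : ℕ ↦ Real.log (2 * d) / (2 * d)) atTop (𝓝 0) :=
    Real.isLittleO_log_id_atTop.tendsto_div_nhds_zero.comp
      (tendsto_natCast_atTop_atTop.const_mul_atTop zero_lt_two)
  have h := (tendsto_const_nhds (x := (1 : ℝ))).sub (hstirling.add hlog)
  rw [add_zero, sub_zero] at h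
  refine h.congr' ?_
  filter_upwards [eventually_gt_atTop 0] with d hd
  have : (0 : ℝ) < d := Nat.cast_pos.2 hd
  rw [Stirling.log_stirlingSeq_formula, logRatioSum_eq_sub_log_factorial,
    Real.log_div (by positivity) (by positivity), Real.log_exp]
  field_simp
  ring

lemma one_div_sub_le_sum_one_div_sq (d M : ℕ) :
    1 / ((d : ℝ) + 1) - 1 / ((d : ℝ) + M + 1) ≤
      ∑ j ∈ Finset.range M, 1 / ((d + j : ℕ) + 1 : ℝ) ^ 2 := by
  induction M with
  | zero => simp
  | succ M ih =>
    rw [Finset.sum_range_succ]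
    push_cast at ih ⊢
    have hstep : 1 / ((d : ℝ) + M + 1) - 1 / ((d : ℝ) + (M + 1) + 1) ≤
        1 / ((d : ℝ) + M + 1) ^ 2 := by
      rw [div_sub_div _ _ (by positivity) (by positivity),
        div_le_div_iff₀ (by positivity) (by positivity)]
      nlinarith [show (0 : ℝ) ≤ d + M by positivity]
    linarith

lemma le_sum_waterFilling_brownianVariance (hc : 0 < c) {d : ℕ} (hd : 0 < d) (M : ℕ) :
    2 * logRatioSum d + d + d ^ 2 * (1 / ((d : ℝ) + 1) - 1 / ((d : ℝ) + M + 1)) ≤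
      ∑ j : Fin (d + M), waterFilling (brownianVariance c j) (brownianVariance c (d - 1)) := by
  have hθ : 0 < brownianVariance c (d - 1) := brownianVariance_pos hc _
  rw [Fin.sum_univ_eq_sum_range fun j ↦
    waterFilling (brownianVariance c j) (brownianVariance c (d - 1)), Finset.sum_range_add]
  refine add_le_add (le_of_eq ?_) ?_
  · have hterm (j : ℕ) (hj : j ∈ Finset.range d) :
        waterFilling (brownianVariance c j) (brownianVariance c (d - 1)) =
          2 * Real.log (d / ((j : ℝ) + 1)) + 1 := by
      rw [waterFilling_of_le hθ (antitone_brownianVariance c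
          (Nat.le_sub_one_of_lt (Finset.mem_range.1 hj))),
        brownianVariance_div_pred hc hd, Real.log_pow, Nat.cast_ofNat]
    rw [Finset.sum_congr rfl hterm, Finset.sum_add_distrib, ← Finset.mul_sum, logRatioSum]
    simp
  · refine (mul_le_mul_of_nonneg_left (one_div_sub_le_sum_one_div_sq d M) (sq_nonneg _)).trans_eq ?_
    rw [Finset.mul_sum]
    refine Finset.sum_congr rfl fun j _ ↦ ?_
    rw [waterFilling_of_ge hθ (antitone_brownianVariance c (by lia)),
      brownianVariance_div_pred hc hd, div_pow, mul_one_div]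

lemma HasBrownianSpectrum.two_mul_div_le_quantErr_sq [IsProbabilityMeasure P]
    (h : HasBrownianSpectrum P X e c) (hc : 0 < c) {d n : ℕ} (hd : 0 < d) (hn : 1 ≤ n)
    (hdn : Real.log n ≤ logRatioSum d) : 2 * c / ((d : ℝ) + 1) ≤ quantErr P X n ^ 2 := by
  refine le_quantErr_sq hn fun α hα hcard ↦ ?_
  have : (0 : ℝ) < d := Nat.cast_pos.2 hd
  have hlog : Real.log α.card ≤ logRatioSum d :=
    (Real.log_le_log (Nat.cast_pos.2 hα.card_pos) (Nat.cast_le.2 hcard)).trans hdn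
  have htail : 1 / ((d : ℝ) + (d ^ 2 : ℕ) + 1) ≤ 1 / d - 1 / ((d : ℝ) + 1) := by
    push_cast
    rw [div_sub_div _ _ (by positivity) (by positivity),
      div_le_div_iff₀ (by positivity) (by positivity)]
    nlinarith
  calc 2 * c / ((d : ℝ) + 1)
      = c / d ^ 2 * (d ^ 2 * (2 / ((d : ℝ) + 1))) := by field_simp
    _ ≤ c / d ^ 2 *
          (d + d ^ 2 * (1 / ((d : ℝ) + 1) - 1 / ((d : ℝ) + (d ^ 2 : ℕ) + 1))) := by
        have hd1 : (d : ℝ) = d ^ 2 * (1 / d) := by field_simp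
        gcongr
        nth_rw 3 [hd1]
        rw [← mul_add]
        gcongr
        linarith [show 2 / ((d : ℝ) + 1) = 1 / (d + 1) + 1 / (d + 1) by ring]
    _ ≤ brownianVariance c (d - 1) *
          (∑ j : Fin (d + d ^ 2), waterFilling (brownianVariance c j) (brownianVariance c (d - 1)) -
            2 * Real.log α.card) := by
        rw [coe_brownianVariance, Nat.cast_pred hd, sub_add_cancel]
        gcongr
        linarith [le_sum_waterFilling_brownianVariance hc hd (d ^ 2)]
    _ ≤ _ := mul_sum_waterFilling_sub_log_card_le_integral_inf' _ (brownianVariance_pos hc _) hα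
        fun a (j : Fin (d + d ^ 2)) ↦ inner ℝ (e (j + 1)) a
    _ ≤ _ := h.integral_gaussianPi_inf'_le hα _

end BrownianSpectrum

section ProductCodebook

lemma exists_finset_forall_exists_sub_sq_le {M : ℕ} (hM : 0 < M) :
    ∃ Γ : Finset ℝ, Γ.card ≤ 2 * M ^ 2 + 1 ∧
      ∀ x : ℝ, ∃ g ∈ Γ, (x - g) ^ 2 ≤ (1 + x ^ 4) / M ^ 2 := by
  have : (0 : ℝ) < M := Nat.cast_pos.2 hM
  refine ⟨(Finset.Icc (-(M : ℤ) ^ 2) (M ^ 2)).image fun i : ℤ ↦ (i : ℝ) / M, ?_, fun x ↦ ?_⟩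
  · refine Finset.card_image_le.trans ?_
    rw [Int.card_Icc]
    lia
  rcases le_or_gt |x| M with hx | hx
  · rw [abs_le] at hx
    refine ⟨⌊x * M⌋ / M, Finset.mem_image.2 ⟨⌊x * M⌋, Finset.mem_Icc.2 ⟨?_, ?_⟩, rfl⟩, ?_⟩
    · rw [Int.le_floor]
      push_cast
      nlinarith
    · have h : (⌊x * M⌋ : ℝ) ≤ (M : ℝ) ^ 2 := (Int.floor_le _).trans (by nlinarith)
      exact_mod_cast h
    · have hdiff : x - ⌊x * M⌋ / M = Int.fract (x * M) / M := by
        rw [Int.fract]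
        field_simp
      rw [hdiff, div_pow]
      gcongr
      nlinarith [Int.fract_nonneg (x * M), Int.fract_lt_one (x * M), show 0 ≤ x ^ 4 by positivity]
  · refine ⟨0, Finset.mem_image.2 ⟨0, by simp, by simp⟩, ?_⟩
    rw [sub_zero, le_div_iff₀ (by positivity)]
    have h : (M : ℝ) ^ 2 ≤ x ^ 2 := by
      rw [← sq_abs x]
      gcongr
    nlinarith [sq_nonneg x]

lemma integral_inf'_sub_sq_le {Ω : Type*} [MeasurableSpace Ω] {P : Measure Ω}
    [IsProbabilityMeasure P] {Y : Ω → ℝ} (hY : MemLp Y 4 P) {Γ : Finset ℝ} (hΓ : Γ.Nonempty)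
    {r : ℝ} (h : ∀ x : ℝ, ∃ g ∈ Γ, (x - g) ^ 2 ≤ (1 + x ^ 4) / r) :
    ∫ ω, Γ.inf' hΓ (fun g ↦ (Y ω - g) ^ 2) ∂P ≤ (1 + ∫ ω, Y ω ^ 4 ∂P) / r := by
  have hY4 : Integrable (fun ω ↦ Y ω ^ 4) P := by
    simpa [(show Even 4 by decide).pow_abs] using hY.integrable_norm_pow'
  have hY2 (g : ℝ) : Integrable (fun ω ↦ (Y ω - g) ^ 2) P :=
    ((hY.mono_exponent (by norm_num)).sub (memLp_const g)).integrable_sq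
  calc _ ≤ ∫ ω, (1 + Y ω ^ 4) / r ∂P := by
        refine integral_mono (integrable_finset_inf' hΓ fun g _ ↦ hY2 g)
          (((integrable_const 1).add hY4).div_const r) fun ω ↦ ?_
        obtain ⟨g, hg, hle⟩ := h (Y ω)
        exact (Finset.inf'_le _ hg).trans hle
    _ = _ := by
        rw [integral_div, integral_add (integrable_const 1) hY4, integral_const, probReal_univ,
          one_smul]

lemma norm_sub_sum_smul_sq_of_orthonormal {H ι : Type*} [NormedAddCommGroup H]
    [InnerProductSpace ℝ H] [Fintype ι] {e : ι → H} (he : Orthonormal ℝ e) (x : H) (b : ι → ℝ) :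
    ‖x - ∑ i, b i • e i‖ ^ 2 =
      ‖x‖ ^ 2 - ∑ i, inner ℝ (e i) x ^ 2 + ∑ i, (inner ℝ (e i) x - b i) ^ 2 := by
  have hcross : inner ℝ x (∑ i, b i • e i) = ∑ i, b i * inner ℝ (e i) x := by
    simp only [inner_sum, real_inner_smul_right, real_inner_comm]
  have hnorm : ‖∑ i, b i • e i‖ ^ 2 = ∑ i, b i ^ 2 := by
    rw [← real_inner_self_eq_norm_sq, he.inner_sum]
    simp [sq]
  have hsq : ∑ i, (inner ℝ (e i) x - b i) ^ 2 =
      ∑ i, inner ℝ (e i) x ^ 2 - 2 * ∑ i, b i * inner ℝ (e i) x + ∑ i, b i ^ 2 := by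
    rw [Finset.mul_sum, ← Finset.sum_sub_distrib, ← Finset.sum_add_distrib]
    exact Finset.sum_congr rfl fun i _ ↦ by ring
  rw [norm_sub_sq_real, hcross, hnorm, hsq]
  ring

lemma exists_finset_inf'_norm_sub_sq_le {H : Type*} [NormedAddCommGroup H]
    [InnerProductSpace ℝ H] {d : ℕ} {e : Fin (d + 1) → H} (he : Orthonormal ℝ e) {Γ : Finset ℝ}
    (hΓ : Γ.Nonempty) {C : Finset (Fin d → ℝ)} (hC : C.Nonempty) :
    ∃ (α : Finset H) (hα : α.Nonempty), α.card ≤ Γ.card * C.card ∧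
      ∀ x, α.inf' hα (fun a ↦ ‖x - a‖ ^ 2) ≤ Γ.inf' hΓ (fun g ↦ (inner ℝ (e 0) x - g) ^ 2) +
        C.inf' hC (fun a ↦ ∑ j, (inner ℝ (e j.succ) x - a j) ^ 2) +
          (‖x‖ ^ 2 - ∑ i, inner ℝ (e i) x ^ 2) := by
  classical
  refine ⟨(Γ ×ˢ C).image fun p ↦ ∑ i, Fin.cons (α := fun _ ↦ ℝ) p.1 p.2 i • e i,
    (hΓ.product hC).image _, Finset.card_image_le.trans_eq (Finset.card_product _ _), fun x ↦ ?_⟩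
  obtain ⟨g, hg, hgmin⟩ := Finset.exists_mem_eq_inf' hΓ fun g ↦ (inner ℝ (e 0) x - g) ^ 2
  obtain ⟨a, ha, hamin⟩ := Finset.exists_mem_eq_inf' hC fun a ↦
    ∑ j, (inner ℝ (e j.succ) x - a j) ^ 2
  refine (Finset.inf'_le _ (Finset.mem_image_of_mem _ (Finset.mk_mem_product hg ha))).trans_eq ?_
  rw [norm_sub_sum_smul_sq_of_orthonormal he, hgmin, hamin, add_comm,
    Fin.sum_univ_succ fun i ↦ (inner ℝ (e i) x - Fin.cons (α := fun _ ↦ ℝ) g a i) ^ 2]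
  simp

end ProductCodebook

section UpperBound

lemma pi_sq_div_six_sub_sum_le {d : ℕ} (hd : 0 < d) :
    Real.pi ^ 2 / 6 - ∑ j ∈ Finset.range d, 1 / ((j : ℝ) + 1) ^ 2 ≤ 1 / d := by
  have hzeta : Tendsto (fun m ↦ ∑ j ∈ Finset.range m, 1 / ((j : ℝ) + 1) ^ 2) atTop
      (𝓝 (Real.pi ^ 2 / 6)) := by
    have h := hasSum_zeta_two.tendsto_sum_nat.comp (tendsto_add_atTop_nat 1)
    simpa [Function.comp_def, Finset.sum_range_succ'] using h
  have hanti : Antitone fun m : ℕ ↦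
      ∑ j ∈ Finset.range (m + 1), 1 / ((j : ℝ) + 1) ^ 2 + 1 / ((m : ℝ) + 1) := by
    refine antitone_nat_of_succ_le fun m ↦ ?_
    rw [Finset.sum_range_succ _ (m + 1), add_assoc]
    push_cast
    gcongr
    rw [div_add_div _ _ (by positivity) (by positivity),
      div_le_div_iff₀ (by positivity) (by positivity)]
    nlinarith [show (0 : ℝ) ≤ m by positivity]
  have hlim := (hzeta.comp (tendsto_add_atTop_nat 1)).add
    (tendsto_one_div_add_atTop_nhds_zero_nat (𝕜 := ℝ))
  obtain ⟨m, rfl⟩ := Nat.exists_eq_succ_of_ne_zero hd.ne'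
  have h := hanti.le_of_tendsto (by simpa [Function.comp_def] using hlim) m
  push_cast
  linarith

lemma brownianVariance_le (c : ℝ≥0) (j : ℕ) : brownianVariance c j ≤ c :=
  div_le_self c.2 (one_le_pow₀ (le_add_of_nonneg_left zero_le))

lemma sum_log_brownianVariance_div {c : ℝ≥0} (hc : 0 < c) (d : ℕ) :
    ∑ j : Fin d, Real.log (brownianVariance c j / brownianVariance c (d - 1)) =
      2 * logRatioSum d := by
  rw [logRatioSum, Finset.mul_sum,
    ← Fin.sum_univ_eq_sum_range fun j ↦ 2 * Real.log (d / ((j : ℝ) + 1))]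
  refine Finset.sum_congr rfl fun j _ ↦ ?_
  rw [brownianVariance_div_pred hc j.pos, Real.log_pow, Nat.cast_ofNat]

lemma eventually_card_mul_exp_le {ε : ℝ} (hε : 0 < ε) :
    ∀ᶠ d : ℕ in atTop, (2 * (d : ℝ) ^ 2 + 1) * (⌈Real.exp ((1 + 2 * ε) * d)⌉₊ + 1) ≤
      Real.exp ((1 + 3 * ε) * d) := by
  have hpoly : (fun d : ℕ ↦ 2 * (d : ℝ) ^ 2 + 1) =o[atTop] fun d : ℕ ↦ Real.exp (ε * d) := by
    have hpow (k : ℕ) := (isLittleO_pow_exp_pos_mul_atTop (k := k) hε).comp_tendsto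
      tendsto_natCast_atTop_atTop
    simpa [Function.comp_def] using ((hpow 2).const_mul_left 2).add (hpow 0)
  filter_upwards [hpoly.bound (show (0 : ℝ) < 1 / 3 by norm_num)] with d hd
  rw [Real.norm_of_nonneg (by positivity), Real.norm_of_nonneg (by positivity)] at hd
  have hone : 1 ≤ Real.exp ((1 + 2 * ε) * d) := Real.one_le_exp (by positivity)
  have hceil := (Nat.ceil_lt_add_one (Real.exp_pos ((1 + 2 * ε) * d)).le).le
  calc _ ≤ 1 / 3 * Real.exp (ε * d) * (3 * Real.exp ((1 + 2 * ε) * d)) := by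
        gcongr
        linarith
    _ = Real.exp (ε * d) * Real.exp ((1 + 2 * ε) * d) := by ring
    _ = _ := by rw [← Real.exp_add]; ring_nf

variable {Ω H : Type*} [MeasurableSpace Ω] [NormedAddCommGroup H] [InnerProductSpace ℝ H]
  {P : Measure Ω} {X : Ω → H} {e : ℕ → H} {c : ℝ≥0}

namespace HasBrownianSpectrum

lemma integral_sum_inner_succ_sq (h : HasBrownianSpectrum P X e c) (d : ℕ) :
    ∫ ω, ∑ j : Fin d, inner ℝ (e (j + 1)) (X ω) ^ 2 ∂P =
      c * ∑ j ∈ Finset.range d, 1 / ((j : ℝ) + 1) ^ 2 := by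
  have hmap := integral_map (h.aemeasurable_inner_succ d) (f := fun x ↦ ∑ j, x j ^ 2)
    (Measurable.aestronglyMeasurable (by fun_prop))
  rw [← hmap, h.map_inner_succ, integral_finsetSum _ fun j _ ↦ integrable_sq_eval_gaussianPi _ j,
    Finset.mul_sum, ← Fin.sum_univ_eq_sum_range fun j ↦ (c : ℝ) * (1 / ((j : ℝ) + 1) ^ 2)]
  refine Finset.sum_congr rfl fun j _ ↦ ?_
  rw [integral_sq_eval_gaussianPi, coe_brownianVariance, mul_one_div]

lemma integral_norm_sq_sub_le (h : HasBrownianSpectrum P X e c) {d : ℕ} (hd : 0 < d) :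
    ∫ ω, (‖X ω‖ ^ 2 - ∑ i : Fin (d + 1), inner ℝ (e i) (X ω) ^ 2) ∂P ≤ c / d := by
  have hsq (j : ℕ) : Integrable (fun ω ↦ inner ℝ (e j) (X ω) ^ 2) P :=
    (h.memLp.const_inner (e j)).integrable_sq
  have htail := mul_le_mul_of_nonneg_left (pi_sq_div_six_sub_sum_le hd) c.coe_nonneg
  have hsum : Integrable (fun ω ↦ ∑ i : Fin (d + 1), inner ℝ (e i) (X ω) ^ 2) P :=
    integrable_finsetSum _ fun i _ ↦ hsq i
  have hsucc : Integrable (fun ω ↦ ∑ j : Fin d, inner ℝ (e (j + 1)) (X ω) ^ 2) P :=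
    integrable_finsetSum _ fun j _ ↦ hsq (j + 1)
  rw [integral_sub (h.memLp.integrable_norm_pow two_ne_zero) hsum]
  simp only [Fin.sum_univ_succ, Fin.val_zero, Fin.val_succ]
  rw [integral_add (hsq 0) hsucc, h.integral_sum_inner_succ_sq]
  rw [mul_sub, mul_one_div] at htail
  linarith [h.integral_norm_sq_le]

lemma quantErr_sq_le_add_add [IsFiniteMeasure P] (h : HasBrownianSpectrum P X e c) {d n : ℕ}
    (hd : 0 < d) {Γ : Finset ℝ} (hΓ : Γ.Nonempty) {C : Finset (Fin d → ℝ)} (hC : C.Nonempty)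
    (hn : Γ.card * C.card ≤ n) :
    quantErr P X n ^ 2 ≤ ∫ ω, Γ.inf' hΓ (fun g ↦ (inner ℝ (e 0) (X ω) - g) ^ 2) ∂P +
      ∫ x, C.inf' hC (fun a ↦ ∑ j, (x j - a j) ^ 2)
        ∂gaussianPi (fun j : Fin d ↦ brownianVariance c j) + c / d := by
  obtain ⟨α, hα, hcard, hle⟩ := exists_finset_inf'_norm_sub_sq_le
    (h.orthonormal.comp (Fin.val : Fin (d + 1) → ℕ) Fin.val_injective) hΓ hC
  have hcoord (j : ℕ) : MemLp (fun ω ↦ inner ℝ (e j) (X ω)) 2 P := h.memLp.const_inner (e j)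
  have hΓint : Integrable (fun ω ↦ Γ.inf' hΓ fun g ↦ (inner ℝ (e 0) (X ω) - g) ^ 2) P :=
    integrable_finset_inf' hΓ fun g _ ↦ ((hcoord 0).sub (memLp_const g)).integrable_sq
  have hCint : Integrable
      (fun ω ↦ C.inf' hC fun a ↦ ∑ j : Fin d, (inner ℝ (e (j + 1)) (X ω) - a j) ^ 2) P :=
    integrable_finset_inf' hC fun a _ ↦ integrable_finsetSum _ fun j _ ↦
      ((hcoord _).sub (memLp_const (a j))).integrable_sq
  have hrest : Integrable (fun ω ↦ ‖X ω‖ ^ 2 - ∑ i : Fin (d + 1), inner ℝ (e i) (X ω) ^ 2) P :=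
    (h.memLp.integrable_norm_pow two_ne_zero).sub
      (integrable_finsetSum _ fun i _ ↦ (hcoord i).integrable_sq)
  rw [← h.map_inner_succ, integral_map (h.aemeasurable_inner_succ d)
    (Continuous.finset_inf'_apply hC fun a _ ↦ by fun_prop).aestronglyMeasurable]
  refine (quantErr_sq_le hα (hcard.trans hn)).trans ((integral_mono
    (integrable_finset_inf' hα fun a _ ↦ integrable_norm_sub_const_sq h.memLp a)
    ((hΓint.add hCint).add hrest) fun ω ↦ hle (X ω)).trans ?_)
  rw [integral_add' (hΓint.add hCint) hrest, integral_add' hΓint hCint]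
  gcongr
  exact h.integral_norm_sq_sub_le hd

lemma exists_quantErr_sq_le [IsProbabilityMeasure P] (h : HasBrownianSpectrum P X e c)
    (hc : 0 < c) {ε : ℝ} (hε : 0 < ε) :
    ∃ ρ ∈ Set.Ico (0 : ℝ) 1, ∀ d N n : ℕ, 0 < d → Real.exp ((1 + 2 * ε) * d) ≤ N →
      (2 * d ^ 2 + 1) * (N + 1) ≤ n →
        quantErr P X n ^ 2 ≤ (1 + ∫ ω, inner ℝ (e 0) (X ω) ^ 4 ∂P) / d ^ 2 +
          (c * (1 + ε) / d + c * d * √(∫ x, x ^ 4 ∂gaussianReal 0 1) * √(5 * ρ ^ d)) + c / d := by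
  obtain ⟨ρ, hρ, hcode⟩ := exists_gaussianPi_codebook hε
  have hexp : Real.exp (-ε) < 1 := Real.exp_lt_one_iff.2 (neg_lt_zero.2 hε)
  refine ⟨max ρ (Real.exp (-ε)), ⟨le_max_of_le_left hρ.1, max_lt hρ.2 hexp⟩,
    fun d N n hd hN hn ↦ ?_⟩
  obtain ⟨Γ, hΓcard, hΓ⟩ := exists_finset_forall_exists_sub_sq_le hd
  have hΓne : Γ.Nonempty := (hΓ 0).imp fun _ hg ↦ hg.1
  obtain ⟨C, hC, hCcard, hCle⟩ := hcode d (fun j ↦ brownianVariance c j)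
    (brownianVariance c (d - 1)) c (brownianVariance_pos hc _)
    (fun j ↦ antitone_brownianVariance c (Nat.le_sub_one_of_lt j.2)) (brownianVariance_le c ·) N
  have hmiss : 4 * ρ ^ d + Real.exp (-(N * Real.exp (-(logRatioSum d + d * ε)))) ≤
      5 * max ρ (Real.exp (-ε)) ^ d := by
    have hNε : d * ε ≤ N * Real.exp (-(logRatioSum d + d * ε)) := calc
      d * ε ≤ Real.exp (d * ε) := by linarith [Real.add_one_le_exp (d * ε)]
      _ = Real.exp ((1 + 2 * ε) * d) * Real.exp (-(d + d * ε)) := by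
        rw [← Real.exp_add]; ring_nf
      _ ≤ _ := by gcongr; exact logRatioSum_le d
    calc _ ≤ 4 * ρ ^ d + Real.exp (-ε) ^ d := by
          rw [← Real.exp_nat_mul]
          gcongr
          linarith
      _ ≤ 4 * max ρ (Real.exp (-ε)) ^ d + max ρ (Real.exp (-ε)) ^ d := by
          gcongr
          exacts [hρ.1, le_max_left _ _, le_max_right _ _]
      _ = _ := by ring
  refine (h.quantErr_sq_le_add_add hd hΓne hC ((Nat.mul_le_mul hΓcard hCcard).trans hn)).trans ?_
  gcongr
  · exact integral_inf'_sub_sq_le h.memLp_inner_zero hΓne hΓ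
  · rw [sum_log_brownianVariance_div hc, mul_div_cancel_left₀ _ two_ne_zero] at hCle
    refine hCle.trans (add_le_add (le_of_eq ?_) (by gcongr))
    rw [coe_brownianVariance, Nat.cast_pred hd, sub_add_cancel]
    field_simp

lemma exists_tendsto_eventually_mul_quantErr_sq_le [IsProbabilityMeasure P]
    (h : HasBrownianSpectrum P X e c) (hc : 0 < c) {ε : ℝ} (hε : 0 < ε) :
    ∃ u : ℕ → ℝ, Tendsto u atTop (𝓝 (c * (2 + ε))) ∧ ∀ᶠ d : ℕ in atTop, ∀ n : ℕ,
      Real.exp ((1 + 3 * ε) * d) ≤ n → d * quantErr P X n ^ 2 ≤ u d := by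
  obtain ⟨ρ, hρ, hle⟩ := h.exists_quantErr_sq_le hc hε
  set m := ∫ ω, inner ℝ (e 0) (X ω) ^ 4 ∂P
  set κ := ∫ x, x ^ 4 ∂gaussianReal 0 1
  refine ⟨fun d ↦ (1 + m) / d + (c * (1 + ε) + c * √κ * √(5 * (d ^ 4 * ρ ^ d))) + c, ?_, ?_⟩
  · have hgrid : Tendsto (fun d : ℕ ↦ (1 + m) / d) atTop (𝓝 0) :=
      tendsto_const_nhds.div_atTop tendsto_natCast_atTop_atTop
    have hmiss := ((tendsto_pow_const_mul_const_pow_of_lt_one 4 hρ.1 hρ.2).const_mul 5).sqrt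
    have hlim := (hgrid.add ((hmiss.const_mul (c * √κ)).const_add (c * (1 + ε)))).add_const (c : ℝ)
    convert hlim using 2
    simp only [mul_zero, Real.sqrt_zero]
    ring
  · filter_upwards [eventually_gt_atTop 0, eventually_card_mul_exp_le hε] with d hd hcard n hn
    have : (0 : ℝ) < d := Nat.cast_pos.2 hd
    have hnN : (2 * d ^ 2 + 1) * (⌈Real.exp ((1 + 2 * ε) * d)⌉₊ + 1) ≤ n := by
      exact_mod_cast hcard.trans hn
    have hmiss : √(5 * ((d : ℝ) ^ 4 * ρ ^ d)) = d ^ 2 * √(5 * ρ ^ d) := by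
      rw [mul_left_comm, Real.sqrt_mul (by positivity), show (d : ℝ) ^ 4 = (d ^ 2) ^ 2 by ring,
        Real.sqrt_sq (by positivity)]
    refine (mul_le_mul_of_nonneg_left (hle d _ n hd (Nat.le_ceil _) hnN) d.cast_nonneg).trans_eq ?_
    rw [hmiss]
    field_simp

end HasBrownianSpectrum

end UpperBound

section Asymptotics

variable {Ω H : Type*} [MeasurableSpace Ω] [NormedAddCommGroup H] [InnerProductSpace ℝ H]
  {P : Measure Ω} [IsProbabilityMeasure P] {X : Ω → H} {e : ℕ → H} {c : ℝ≥0}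

lemma tendsto_log_natCast_atTop : Tendsto (fun n : ℕ ↦ Real.log n) atTop atTop :=
  Real.tendsto_log_atTop.comp tendsto_natCast_atTop_atTop

namespace HasBrownianSpectrum

lemma eventually_lt_log_mul_quantErr_sq (h : HasBrownianSpectrum P X e c) (hc : 0 < c) {r : ℝ}
    (hr : r < 2 * c) : ∀ᶠ n : ℕ in atTop, r < Real.log n * quantErr P X n ^ 2 := by
  obtain ⟨a, hra, ha⟩ : ∃ a : ℝ, r < 2 * c / a ∧ 1 < a := by
    have hlim : Tendsto (fun a : ℝ ↦ 2 * c / a) (𝓝[>] 1) (𝓝 (2 * c / 1)) :=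
      (tendsto_const_nhds.div tendsto_id one_ne_zero).mono_left nhdsWithin_le_nhds
    rw [div_one] at hlim
    exact ((hlim.eventually_const_lt hr).and self_mem_nhdsWithin).exists
  have ha0 : 0 < a := one_pos.trans ha
  set d : ℕ → ℕ := fun n ↦ ⌈a * Real.log n⌉₊
  have hd : Tendsto d atTop atTop :=
    tendsto_nat_ceil_atTop.comp (tendsto_log_natCast_atTop.const_mul_atTop ha0)
  have hratio : ∀ᶠ n in atTop, a⁻¹ < logRatioSum (d n) / d n :=
    (tendsto_logRatioSum_div.comp hd).eventually_const_lt (inv_lt_one_of_one_lt₀ ha)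
  have hlim : Tendsto (fun n : ℕ ↦ 2 * c / (d n / Real.log n + 1 / Real.log n)) atTop
      (𝓝 (2 * c / a)) := by
    have hceil := (tendsto_nat_ceil_mul_div_atTop ha0.le).comp tendsto_log_natCast_atTop
    have hsum := hceil.add ((tendsto_const_nhds (x := (1 : ℝ))).div_atTop tendsto_log_natCast_atTop)
    rw [add_zero] at hsum
    exact tendsto_const_nhds.div hsum ha0.ne'
  filter_upwards [hlim.eventually_const_lt hra, hratio, hd.eventually_gt_atTop 0,
    tendsto_log_natCast_atTop.eventually_gt_atTop 0, eventually_ge_atTop 1]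
    with n hrn hdn hd0 hlog hn
  have hdle : Real.log n ≤ logRatioSum (d n) := by
    rw [lt_div_iff₀ (Nat.cast_pos.2 hd0)] at hdn
    refine le_trans ?_ hdn.le
    rw [← div_eq_inv_mul, le_div_iff₀' ha0]
    exact Nat.le_ceil _
  calc r < 2 * c / (d n / Real.log n + 1 / Real.log n) := hrn
    _ = Real.log n * (2 * c / ((d n : ℝ) + 1)) := by field_simp
    _ ≤ _ := by gcongr; exact h.two_mul_div_le_quantErr_sq hc hd0 hn hdle

lemma eventually_log_mul_quantErr_sq_lt (h : HasBrownianSpectrum P X e c) (hc : 0 < c) {r : ℝ}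
    (hr : 2 * c < r) : ∀ᶠ n : ℕ in atTop, Real.log n * quantErr P X n ^ 2 < r := by
  obtain ⟨ε, hεr, hε⟩ : ∃ ε : ℝ, (1 + 3 * ε) * (c * (2 + ε)) < r ∧ 0 < ε := by
    have hlim : Tendsto (fun ε : ℝ ↦ (1 + 3 * ε) * (c * (2 + ε))) (𝓝[>] 0) (𝓝 (2 * c)) := by
      refine (Continuous.tendsto' (by fun_prop) _ _ ?_).mono_left nhdsWithin_le_nhds
      ring
    exact ((hlim.eventually_lt_const hr).and self_mem_nhdsWithin).exists
  obtain ⟨u, hu, hle⟩ := h.exists_tendsto_eventually_mul_quantErr_sq_le hc hε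
  have ha : 0 < 1 + 3 * ε := by positivity
  set d : ℕ → ℕ := fun n ↦ ⌊(1 + 3 * ε)⁻¹ * Real.log n⌋₊
  have hd : Tendsto d atTop atTop :=
    tendsto_nat_floor_atTop.comp (tendsto_log_natCast_atTop.const_mul_atTop (inv_pos.2 ha))
  have hlim : Tendsto (fun n : ℕ ↦ (d n / Real.log n)⁻¹ * u (d n)) atTop
      (𝓝 ((1 + 3 * ε) * (c * (2 + ε)))) := by
    have hfloor := (tendsto_nat_floor_mul_div_atTop (inv_pos.2 ha).le).comp
      tendsto_log_natCast_atTop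
    simpa using (hfloor.inv₀ (inv_pos.2 ha).ne').mul (hu.comp hd)
  filter_upwards [hlim.eventually_lt_const hεr, hd.eventually hle, hd.eventually_gt_atTop 0,
    tendsto_log_natCast_atTop.eventually_gt_atTop 0, eventually_gt_atTop 0]
    with n hrn hdn hd0 hlog hn
  have : (0 : ℝ) < d n := Nat.cast_pos.2 hd0
  have hdn' : Real.exp ((1 + 3 * ε) * d n) ≤ n := by
    rw [← Real.le_log_iff_exp_le (Nat.cast_pos.2 hn), ← le_inv_mul_iff₀ ha]
    exact Nat.floor_le (by positivity)
  calc Real.log n * quantErr P X n ^ 2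
      = (d n / Real.log n)⁻¹ * (d n * quantErr P X n ^ 2) := by field_simp
    _ ≤ (d n / Real.log n)⁻¹ * u (d n) := by gcongr; exact hdn n hdn'
    _ < r := hrn

theorem tendsto_sqrt_log_mul_quantErr (h : HasBrownianSpectrum P X e c) (hc : 0 < c) :
    Tendsto (fun n : ℕ ↦ √(Real.log n) * quantErr P X n) atTop (𝓝 √(2 * c)) := by
  have hsq : Tendsto (fun n : ℕ ↦ Real.log n * quantErr P X n ^ 2) atTop (𝓝 (2 * c)) :=
    tendsto_order.2 ⟨fun _ hr ↦ h.eventually_lt_log_mul_quantErr_sq hc hr,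
      fun _ hr ↦ h.eventually_log_mul_quantErr_sq_lt hc hr⟩
  refine hsq.sqrt.congr fun n ↦ ?_
  rw [Real.sqrt_mul (Real.log_natCast_nonneg n), Real.sqrt_sq quantErr_nonneg]

end HasBrownianSpectrum

end Asymptotics

section RiemannSums

/-- The largest point of the grid `i * (T / (n + 1))`, `i ∈ ℤ`, that is at most `t`. -/
noncomputable def gridFloor (T : ℝ) (n : ℕ) (t : ℝ) : ℝ := ⌊t / (T / (n + 1))⌋ * (T / (n + 1))

/-- The left Riemann sum of `f` over `[0, T]` with `n + 1` intervals of equal length. -/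
noncomputable def riemannSum (T : ℝ) (n : ℕ) (f : ℝ → ℝ) : ℝ :=
  ∑ i : Fin (n + 1), T / (n + 1) * f (i * (T / (n + 1)))

variable {T : ℝ}

lemma gridFloor_le (hT : 0 < T) (n : ℕ) (t : ℝ) : gridFloor T n t ≤ t := by
  rw [gridFloor, ← le_div_iff₀ (by positivity)]
  exact Int.floor_le _

lemma sub_le_gridFloor (hT : 0 < T) (n : ℕ) (t : ℝ) : t - T / (n + 1) ≤ gridFloor T n t := by
  have hw : 0 < T / ((n : ℝ) + 1) := by positivity
  calc t - T / (n + 1) = (t / (T / (n + 1)) - 1) * (T / (n + 1)) := by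
        rw [sub_mul, div_mul_cancel₀ _ hw.ne', one_mul]
    _ ≤ _ := mul_le_mul_of_nonneg_right (Int.sub_one_lt_floor _).le hw.le

lemma gridFloor_mem_Icc (hT : 0 < T) (n : ℕ) {t : ℝ} (ht : t ∈ Set.Icc 0 T) :
    gridFloor T n t ∈ Set.Icc 0 T := by
  refine ⟨mul_nonneg (Int.cast_nonneg (Int.floor_nonneg.2 ?_)) (by positivity),
    (gridFloor_le hT n t).trans ht.2⟩
  exact div_nonneg ht.1 (by positivity)

lemma grid_mem_Icc (hT : 0 < T) {n : ℕ} (i : Fin (n + 1)) :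
    (i : ℝ) * (T / (n + 1)) ∈ Set.Icc 0 T := by
  have hi : (i : ℝ) ≤ n + 1 := by exact_mod_cast i.2.le
  refine ⟨by positivity, ?_⟩
  rw [← mul_div_assoc, div_le_iff₀ (by positivity), mul_comm]
  gcongr

lemma tendsto_gridFloor (hT : 0 < T) (t : ℝ) :
    Tendsto (fun n ↦ gridFloor T n t) atTop (𝓝 t) := by
  have hw : Tendsto (fun n : ℕ ↦ t - T / ((n : ℝ) + 1)) atTop (𝓝 t) := by
    simpa [div_eq_mul_inv] using
      ((tendsto_one_div_add_atTop_nhds_zero_nat (𝕜 := ℝ)).const_mul T).const_sub t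
  exact tendsto_of_tendsto_of_tendsto_of_le_of_le hw tendsto_const_nhds
    (fun n ↦ sub_le_gridFloor hT n t) fun n ↦ gridFloor_le hT n t

lemma gridFloor_ae_eq (hT : 0 < T) (n i : ℕ) :
    gridFloor T n =ᵐ[volume.restrict (Set.uIoc (i * (T / (n + 1))) ((i + 1 : ℕ) * (T / (n + 1))))]
      fun _ ↦ i * (T / (n + 1)) := by
  have hw : 0 < T / ((n : ℝ) + 1) := by positivity
  rw [Set.uIoc_of_le (by gcongr; simp), Measure.restrict_congr_set Ioo_ae_eq_Ioc.symm]
  refine (ae_restrict_iff' measurableSet_Ioo).2 (ae_of_all _ fun t ht ↦ ?_)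
  have hfloor : ⌊t / (T / (n + 1))⌋ = (i : ℤ) := by
    rw [Int.floor_eq_iff, le_div_iff₀ hw, div_lt_iff₀ hw]
    push_cast at ht ⊢
    exact ⟨ht.1.le, ht.2⟩
  rw [gridFloor, hfloor, Int.cast_natCast]

lemma intervalIntegrable_comp_gridFloor (hT : 0 < T) (n i : ℕ) (f : ℝ → ℝ) :
    IntervalIntegrable (fun t ↦ f (gridFloor T n t)) volume (i * (T / (n + 1)))
      ((i + 1 : ℕ) * (T / (n + 1))) :=
  intervalIntegrable_const.congr_ae ((gridFloor_ae_eq hT n i).fun_comp f).symm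

lemma aestronglyMeasurable_comp_gridFloor (hT : 0 < T) (n : ℕ) (f : ℝ → ℝ) :
    AEStronglyMeasurable (fun t ↦ f (gridFloor T n t)) (volume.restrict (Set.uIoc 0 T)) := by
  have h := IntervalIntegrable.trans_iterate (n := n + 1) (a := fun i : ℕ ↦ i * (T / (n + 1)))
    fun i _ ↦ intervalIntegrable_comp_gridFloor hT n i f
  have hend : ((n + 1 : ℕ) : ℝ) * (T / (n + 1)) = T := by push_cast; field_simp
  simpa only [Nat.cast_zero, zero_mul, hend] using h.def'.aestronglyMeasurable

lemma integral_comp_gridFloor (hT : 0 < T) (n : ℕ) (f : ℝ → ℝ) :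
    ∫ t in 0..T, f (gridFloor T n t) = riemannSum T n f := by
  have h := intervalIntegral.sum_integral_adjacent_intervals (n := n + 1)
    (a := fun i : ℕ ↦ i * (T / (n + 1)))
    fun i _ ↦ intervalIntegrable_comp_gridFloor hT n i f
  have hend : ((n + 1 : ℕ) : ℝ) * (T / (n + 1)) = T := by push_cast; field_simp
  simp only [Nat.cast_zero, zero_mul, hend] at h
  rw [← h, riemannSum, ← Fin.sum_univ_eq_sum_range fun i ↦
    ∫ t in (i * (T / (n + 1)))..((i + 1 : ℕ) * (T / (n + 1))), f (gridFloor T n t)]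
  refine Finset.sum_congr rfl fun i _ ↦ ?_
  refine (intervalIntegral.integral_congr_ae_restrict
    ((gridFloor_ae_eq hT n i).fun_comp f)).trans ?_
  simp only [Function.comp_apply, intervalIntegral.integral_const, smul_eq_mul]
  push_cast
  ring

lemma abs_riemannSum_le (hT : 0 < T) {n : ℕ} {f : ℝ → ℝ} {C : ℝ}
    (hC : ∀ t ∈ Set.Icc 0 T, |f t| ≤ C) : |riemannSum T n f| ≤ C * T := by
  rw [← integral_comp_gridFloor hT]
  refine (intervalIntegral.norm_integral_le_of_norm_le_const
    (f := fun t ↦ f (gridFloor T n t)) (C := C) fun t ht ↦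
    hC _ (gridFloor_mem_Icc hT n ?_)).trans_eq (by rw [sub_zero, abs_of_pos hT])
  rw [Set.uIoc_of_le hT.le] at ht
  exact Set.Ioc_subset_Icc_self ht

lemma tendsto_riemannSum_of_abs_le (hT : 0 < T) {f : ℕ → ℝ → ℝ} {g : ℝ → ℝ} {C : ℝ}
    (hC : ∀ n, ∀ t ∈ Set.Icc 0 T, |f n t| ≤ C)
    (hlim : ∀ t ∈ Set.Icc 0 T, Tendsto (fun n ↦ f n (gridFloor T n t)) atTop (𝓝 (g t))) :
    Tendsto (fun n ↦ riemannSum T n (f n)) atTop (𝓝 (∫ t in 0..T, g t)) := by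
  have hsub : Set.uIoc 0 T ⊆ Set.Icc 0 T := by
    rw [Set.uIoc_of_le hT.le]; exact Set.Ioc_subset_Icc_self
  simp only [← integral_comp_gridFloor hT]
  exact intervalIntegral.tendsto_integral_filter_of_dominated_convergence (fun _ ↦ C)
    (.of_forall fun n ↦ aestronglyMeasurable_comp_gridFloor hT n (f n))
    (.of_forall fun n ↦ ae_of_all _ fun t ht ↦ hC n _ (gridFloor_mem_Icc hT n (hsub ht)))
    intervalIntegrable_const (ae_of_all _ fun t ht ↦ hlim t (hsub ht))

lemma tendsto_riemannSum (hT : 0 < T) {f : ℝ → ℝ} (hf : ContinuousOn f (Set.Icc 0 T)) :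
    Tendsto (fun n ↦ riemannSum T n f) atTop (𝓝 (∫ t in 0..T, f t)) := by
  obtain ⟨C, hC⟩ := isCompact_Icc.exists_bound_of_continuousOn hf
  exact tendsto_riemannSum_of_abs_le hT (fun _ ↦ hC) fun t ht ↦
    (hf t ht).tendsto.comp (tendsto_nhdsWithin_iff.2 ⟨tendsto_gridFloor hT t,
      .of_forall fun n ↦ gridFloor_mem_Icc hT n ht⟩)

lemma tendsto_riemannSum_riemannSum (hT : 0 < T) {f : ℝ → ℝ → ℝ}
    (hf : ContinuousOn f.uncurry (Set.Icc 0 T ×ˢ Set.Icc 0 T)) :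
    Tendsto (fun n ↦ riemannSum T n fun t ↦ riemannSum T n (f t)) atTop
      (𝓝 (∫ t in 0..T, ∫ s in 0..T, f t s)) := by
  obtain ⟨C, hC⟩ := (isCompact_Icc.prod isCompact_Icc).exists_bound_of_continuousOn hf
  refine tendsto_riemannSum_of_abs_le hT
    (fun n t ht ↦ abs_riemannSum_le hT fun s hs ↦ hC (t, s) ⟨ht, hs⟩) fun t ht ↦ ?_
  refine tendsto_riemannSum_of_abs_le hT (f := fun n ↦ f (gridFloor T n t))
    (fun n s hs ↦ hC (_, s) ⟨gridFloor_mem_Icc hT n ht, hs⟩) fun s hs ↦ ?_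
  exact (hf (t, s) ⟨ht, hs⟩).tendsto.comp (tendsto_nhdsWithin_iff.2
    ⟨(tendsto_gridFloor hT t).prodMk_nhds (tendsto_gridFloor hT s),
      .of_forall fun n ↦ ⟨gridFloor_mem_Icc hT n ht, gridFloor_mem_Icc hT n hs⟩⟩)

end RiemannSums

section GaussianLaws

variable {Ω : Type*} [MeasurableSpace Ω] {P : Measure Ω}

lemma aemeasurable_of_map_eq_gaussianReal {Y : Ω → ℝ} {m : ℝ} {v : ℝ≥0}
    (h : P.map Y = gaussianReal m v) : AEMeasurable Y P :=
  .of_map_ne_zero (h ▸ IsProbabilityMeasure.ne_zero _)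

lemma hasLaw_gaussianReal_of_ae_tendsto [IsProbabilityMeasure P] {Y : ℕ → Ω → ℝ} {Z : Ω → ℝ}
    {m : ℕ → ℝ} {m₀ : ℝ} {v : ℕ → ℝ≥0} {v₀ : ℝ≥0}
    (hY : ∀ n, HasLaw (Y n) (gaussianReal (m n) (v n)) P)
    (hlim : ∀ᵐ ω ∂P, Tendsto (fun n ↦ Y n ω) atTop (𝓝 (Z ω)))
    (hm : Tendsto m atTop (𝓝 m₀)) (hv : Tendsto v atTop (𝓝 v₀)) :
    HasLaw Z (gaussianReal m₀ v₀) P := by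
  have hZ : AEMeasurable Z P :=
    aemeasurable_of_tendsto_metrizable_ae _ (fun n ↦ (hY n).aemeasurable) hlim
  have hlimit : TendstoInDistribution Y atTop Z (fun _ ↦ P) P :=
    tendstoInDistribution_of_ae_tendsto (fun n ↦ (hY n).aemeasurable) hZ hlim
  refine ⟨hZ, Measure.ext_of_charFun (funext fun u ↦ ?_)⟩
  have hchar := ProbabilityMeasure.tendsto_iff_tendsto_charFun.1 hlimit.tendsto u
  simp only [ProbabilityMeasure.coe_mk, (hY _).map_eq, charFun_gaussianReal] at hchar
  rw [charFun_gaussianReal]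
  refine tendsto_nhds_unique hchar (Complex.continuous_exp.tendsto _ |>.comp ?_)
  have hm' := (Complex.continuous_ofReal.tendsto _).comp hm
  have hv' := (Complex.continuous_ofReal.tendsto _).comp ((NNReal.continuous_coe.tendsto _).comp hv)
  exact ((hm'.const_mul _).mul_const _).sub ((hv'.mul_const _).div_const _)

lemma hasLaw_gaussianPi_of_sum_mul [IsProbabilityMeasure P] {ι : Type*} [Fintype ι]
    {Y : ι → Ω → ℝ} {v : ι → ℝ≥0}
    (h : ∀ u : ι → ℝ, HasLaw (fun ω ↦ ∑ i, u i * Y i ω)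
      (gaussianReal 0 (∑ i, u i ^ 2 * v i).toNNReal) P) :
    HasLaw (fun ω i ↦ Y i ω) (gaussianPi v) P := by
  classical
  have hmeas : AEMeasurable (fun ω i ↦ Y i ω) P := aemeasurable_pi_lambda _ fun i ↦ by
    simpa [Pi.single_apply] using (h (Pi.single i 1)).aemeasurable
  have : IsProbabilityMeasure (P.map fun ω i ↦ Y i ω) := Measure.isProbabilityMeasure_map hmeas
  refine ⟨hmeas, charFun_eq_pi_iff.1 fun u ↦ ?_⟩
  have hsum (ω : Ω) : inner ℝ (WithLp.toLp 2 fun i ↦ Y i ω) u = ∑ i, u i * Y i ω := by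
    simp [PiLp.inner_apply]
  have hvar : 0 ≤ ∑ i, u i ^ 2 * (v i : ℝ) := by positivity
  have hlaw := charFun_gaussianReal (μ := 0) (v := (∑ i, u i ^ 2 * v i).toNNReal) 1
  rw [← (h u).map_eq, charFun_apply_real, integral_map (h u).aemeasurable (by fun_prop)] at hlaw
  rw [charFun_apply, integral_map (by fun_prop) (by fun_prop), integral_map hmeas (by fun_prop)]
  simp only [hsum, charFun_gaussianReal, ← Complex.exp_sum]
  simp only [Complex.ofReal_one, one_mul] at hlaw
  rw [hlaw, Real.coe_toNNReal _ hvar]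
  congr 1
  push_cast
  simp only [mul_zero, zero_mul, zero_sub, one_pow, mul_one, Finset.sum_neg_distrib,
    Finset.sum_div]
  simp only [mul_comm]

end GaussianLaws

section GaussianProcess

lemma riemannSum_sum_mul {ι : Type*} [Fintype ι] (T : ℝ) (n : ℕ) (u : ι → ℝ) (f : ι → ℝ → ℝ) :
    riemannSum T n (fun t ↦ ∑ i, u i * f i t) = ∑ i, u i * riemannSum T n (f i) := by
  simp only [riemannSum, Finset.mul_sum]
  rw [Finset.sum_comm]
  exact Finset.sum_congr rfl fun _ _ ↦ Finset.sum_congr rfl fun _ _ ↦ mul_left_comm _ _ _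

lemma riemannSum_riemannSum_sum_mul {ι : Type*} [Fintype ι] (T : ℝ) (n : ℕ) (u : ι → ℝ)
    (g : ι → ℝ → ℝ) (K : ℝ → ℝ → ℝ) :
    riemannSum T n (fun t ↦ riemannSum T n fun s ↦
        (∑ i, u i * g i t) * (∑ j, u j * g j s) * K t s) =
      ∑ i, ∑ j, u i * u j *
        riemannSum T n fun t ↦ riemannSum T n fun s ↦ g i t * g j s * K t s := by
  have hexpand (t s : ℝ) : (∑ i, u i * g i t) * (∑ j, u j * g j s) * K t s =
      ∑ i, u i * ∑ j, u j * (g i t * g j s * K t s) := by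
    rw [Finset.sum_mul_sum, Finset.sum_mul]
    simp only [Finset.sum_mul, Finset.mul_sum]
    exact Finset.sum_congr rfl fun _ _ ↦ Finset.sum_congr rfl fun _ _ ↦ by ring
  simp only [hexpand, riemannSum_sum_mul]
  simp only [Finset.mul_sum, mul_assoc]

/-- The finite-dimensional distributions of `Z` over `S` are centered Gaussians with covariance
`K`, stated through the laws of linear combinations. -/
def HasGaussianCovariance {Ω ι : Type*} [MeasurableSpace Ω] (P : Measure Ω) (Z : ι → Ω → ℝ)
    (S : Set ι) (K : ι → ι → ℝ) : Prop :=
  ∀ (m : ℕ) (t : Fin m → ι), (∀ i, t i ∈ S) → ∀ c : Fin m → ℝ,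
    P.map (fun ω ↦ ∑ i, c i * Z (t i) ω) =
      gaussianReal 0 (∑ i, ∑ j, c i * c j * K (t i) (t j)).toNNReal

namespace HasGaussianCovariance

variable {Ω : Type*} [MeasurableSpace Ω] {P : Measure Ω}

lemma hasLaw_sum_mul {ι : Type*} {Z : ι → Ω → ℝ} {S : Set ι} {K : ι → ι → ℝ}
    (h : HasGaussianCovariance P Z S K) {m : ℕ} {t : Fin m → ι} (ht : ∀ i, t i ∈ S)
    (c : Fin m → ℝ) : HasLaw (fun ω ↦ ∑ i, c i * Z (t i) ω)
      (gaussianReal 0 (∑ i, ∑ j, c i * c j * K (t i) (t j)).toNNReal) P :=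
  ⟨aemeasurable_of_map_eq_gaussianReal (h m t ht c), h m t ht c⟩

lemma hasLaw_eval {ι : Type*} {Z : ι → Ω → ℝ} {S : Set ι} {K : ι → ι → ℝ}
    (h : HasGaussianCovariance P Z S K) {t : ι} (ht : t ∈ S) :
    HasLaw (Z t) (gaussianReal 0 (K t t).toNNReal) P := by
  simpa using h.hasLaw_sum_mul (fun _ : Fin 1 ↦ ht) fun _ ↦ 1

variable {T : ℝ} {Z : ℝ → Ω → ℝ} {K : ℝ → ℝ → ℝ}

lemma hasLaw_riemannSum_mul (hT : 0 < T) (h : HasGaussianCovariance P Z (Set.Icc 0 T) K) (n : ℕ)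
    (g : ℝ → ℝ) : HasLaw (fun ω ↦ riemannSum T n fun t ↦ g t * Z t ω)
      (gaussianReal 0
        (riemannSum T n fun t ↦ riemannSum T n fun s ↦ g t * g s * K t s).toNNReal) P := by
  convert! h.hasLaw_sum_mul (fun i : Fin (n + 1) ↦ grid_mem_Icc hT i)
    (fun i ↦ T / (n + 1) * g (i * (T / (n + 1)))) using 3
  · simp only [riemannSum, mul_assoc]
  · simp only [riemannSum, Finset.mul_sum]
    exact Finset.sum_congr rfl fun _ _ ↦ Finset.sum_congr rfl fun _ _ ↦ by ring

lemma hasLaw_sum_mul_integral [IsProbabilityMeasure P] (hT : 0 < T)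
    (h : HasGaussianCovariance P Z (Set.Icc 0 T) K)
    (hcont : ∀ᵐ ω ∂P, ContinuousOn (fun t ↦ Z t ω) (Set.Icc 0 T))
    (hK : ContinuousOn K.uncurry (Set.Icc 0 T ×ˢ Set.Icc 0 T)) {ι : Type*} [Fintype ι]
    {g : ι → ℝ → ℝ} (hg : ∀ i, ContinuousOn (g i) (Set.Icc 0 T)) (u : ι → ℝ) :
    HasLaw (fun ω ↦ ∑ i, u i * ∫ t in 0..T, g i t * Z t ω)
      (gaussianReal 0 (∑ i, ∑ j, u i * u j *
        ∫ t in 0..T, ∫ s in 0..T, g i t * g j s * K t s).toNNReal) P := by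
  refine hasLaw_gaussianReal_of_ae_tendsto
    (fun n ↦ h.hasLaw_riemannSum_mul hT n fun t ↦ ∑ i, u i * g i t) ?_ tendsto_const_nhds
    ((continuous_real_toNNReal.tendsto _).comp ?_)
  · filter_upwards [hcont] with ω hω
    have hlim := tendsto_finsetSum Finset.univ fun i _ ↦
      (tendsto_riemannSum hT ((hg i).mul hω)).const_mul (u i)
    simpa only [Finset.sum_mul, mul_assoc, riemannSum_sum_mul] using! hlim
  · simp only [riemannSum_riemannSum_sum_mul]
    refine tendsto_finsetSum _ fun i _ ↦ tendsto_finsetSum _ fun j _ ↦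
      (tendsto_riemannSum_riemannSum hT ?_).const_mul _
    exact (((hg i).comp continuousOn_fst fun _ hp ↦ hp.1).mul
      ((hg j).comp continuousOn_snd fun _ hp ↦ hp.2)).mul hK

lemma hasLaw_integral [IsProbabilityMeasure P] (hT : 0 < T)
    (h : HasGaussianCovariance P Z (Set.Icc 0 T) K)
    (hcont : ∀ᵐ ω ∂P, ContinuousOn (fun t ↦ Z t ω) (Set.Icc 0 T))
    (hK : ContinuousOn K.uncurry (Set.Icc 0 T ×ˢ Set.Icc 0 T))
    {g : ℝ → ℝ} (hg : ContinuousOn g (Set.Icc 0 T)) :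
    HasLaw (fun ω ↦ ∫ t in 0..T, g t * Z t ω)
      (gaussianReal 0 (∫ t in 0..T, ∫ s in 0..T, g t * g s * K t s).toNNReal) P := by
  simpa using h.hasLaw_sum_mul_integral hT hcont hK (fun _ : Unit ↦ hg) fun _ ↦ 1

lemma hasLaw_integral_pi [IsProbabilityMeasure P] (hT : 0 < T)
    (h : HasGaussianCovariance P Z (Set.Icc 0 T) K)
    (hcont : ∀ᵐ ω ∂P, ContinuousOn (fun t ↦ Z t ω) (Set.Icc 0 T))
    (hK : ContinuousOn K.uncurry (Set.Icc 0 T ×ˢ Set.Icc 0 T))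
    {ι : Type*} [Fintype ι] [DecidableEq ι] {g : ι → ℝ → ℝ}
    (hg : ∀ i, ContinuousOn (g i) (Set.Icc 0 T)) {v : ι → ℝ≥0}
    (horth : ∀ i j, ∫ t in 0..T, ∫ s in 0..T, g i t * g j s * K t s =
      if i = j then (v i : ℝ) else 0) :
    HasLaw (fun ω i ↦ ∫ t in 0..T, g i t * Z t ω) (gaussianPi v) P := by
  refine hasLaw_gaussianPi_of_sum_mul fun u ↦ ?_
  simpa [horth, ← sq] using h.hasLaw_sum_mul_integral hT hcont hK hg u

lemma integrable_sq_eval {ι : Type*} {Z : ι → Ω → ℝ} {S : Set ι} {K : ι → ι → ℝ}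
    (h : HasGaussianCovariance P Z S K) {t : ι} (ht : t ∈ S) :
    Integrable (fun ω ↦ Z t ω ^ 2) P := by
  have hlaw := h.hasLaw_eval ht
  have hsq := integrable_sq_gaussianReal (K t t).toNNReal
  rw [← hlaw.map_eq] at hsq
  exact hsq.comp_aemeasurable hlaw.aemeasurable

lemma integral_sq_eval {ι : Type*} {Z : ι → Ω → ℝ} {S : Set ι} {K : ι → ι → ℝ}
    (h : HasGaussianCovariance P Z S K) {t : ι} (ht : t ∈ S) (hK : 0 ≤ K t t) :
    ∫ ω, Z t ω ^ 2 ∂P = K t t := by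
  have hlaw := h.hasLaw_eval ht
  refine (hlaw.integral_comp (f := fun x ↦ x ^ 2) (by fun_prop)).trans ?_
  rw [integral_sq_gaussianReal, Real.coe_toNNReal _ hK]

lemma lintegral_integral_sq_le (hT : 0 < T) (h : HasGaussianCovariance P Z (Set.Icc 0 T) K)
    (hcont : ∀ᵐ ω ∂P, ContinuousOn (fun t ↦ Z t ω) (Set.Icc 0 T))
    (hK : ContinuousOn (fun t ↦ K t t) (Set.Icc 0 T)) (hK₀ : ∀ t ∈ Set.Icc 0 T, 0 ≤ K t t) :
    ∫⁻ ω, ENNReal.ofReal (∫ t in 0..T, Z t ω ^ 2) ∂P ≤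
      ENNReal.ofReal (∫ t in 0..T, K t t) := by
  let R (n : ℕ) (ω : Ω) : ℝ := riemannSum T n fun t ↦ Z t ω ^ 2
  have hint (n : ℕ) (i : Fin (n + 1)) :
      Integrable (fun ω ↦ T / (n + 1) * Z (i * (T / (n + 1))) ω ^ 2) P :=
    (h.integrable_sq_eval (grid_mem_Icc hT i)).const_mul _
  have hRint (n : ℕ) : Integrable (R n) P := integrable_finsetSum _ fun i _ ↦ hint n i
  have hR (n : ℕ) : ∫ ω, R n ω ∂P = riemannSum T n fun t ↦ K t t := by
    refine (integral_finsetSum _ fun i _ ↦ hint n i).trans (Finset.sum_congr rfl fun i _ ↦ ?_)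
    rw [integral_const_mul,
      h.integral_sq_eval (grid_mem_Icc hT i) (hK₀ _ (grid_mem_Icc hT i))]
  have hRlim : ∀ᵐ ω ∂P, ENNReal.ofReal (∫ t in 0..T, Z t ω ^ 2) =
      liminf (fun n ↦ ENNReal.ofReal (R n ω)) atTop := by
    filter_upwards [hcont] with ω hω
    exact (ENNReal.tendsto_ofReal (tendsto_riemannSum hT (hω.pow 2))).liminf_eq.symm
  have hmoment (n : ℕ) : ∫⁻ ω, ENNReal.ofReal (R n ω) ∂P =
      ENNReal.ofReal (riemannSum T n fun t ↦ K t t) := by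
    rw [← ofReal_integral_eq_lintegral_ofReal (hRint n)
      (ae_of_all _ fun ω ↦ Finset.sum_nonneg fun i _ ↦ by positivity), hR]
  calc ∫⁻ ω, ENNReal.ofReal (∫ t in 0..T, Z t ω ^ 2) ∂P
      = ∫⁻ ω, liminf (fun n ↦ ENNReal.ofReal (R n ω)) atTop ∂P := lintegral_congr_ae hRlim
    _ ≤ liminf (fun n ↦ ∫⁻ ω, ENNReal.ofReal (R n ω) ∂P) atTop :=
      lintegral_liminf_le' fun n ↦ (hRint n).aemeasurable.ennreal_ofReal
    _ = ENNReal.ofReal (∫ t in 0..T, K t t) := by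
      simp only [hmoment]
      exact (ENNReal.tendsto_ofReal (tendsto_riemannSum hT hK)).liminf_eq

end HasGaussianCovariance

end GaussianProcess

section CosineBasis

/-- The orthonormal cosine basis of `L²([0, T])`; its non-constant elements diagonalize the
covariance `min (k + t) (k + s)` modulo constants. -/
noncomputable def cosBasis (T : ℝ) (j : ℕ) (t : ℝ) : ℝ :=
  (if j = 0 then √(1 / T) else √(2 / T)) * Real.cos (j * Real.pi / T * t)

variable {T : ℝ}

@[fun_prop]
lemma continuous_cosBasis (T : ℝ) (j : ℕ) : Continuous (cosBasis T j) := by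
  unfold cosBasis
  fun_prop

lemma cosBasis_zero (T t : ℝ) : cosBasis T 0 t = √(1 / T) := by
  simp [cosBasis]

lemma integral_cos_int_mul_pi_div (hT : 0 < T) (m : ℤ) :
    ∫ t in 0..T, Real.cos (m * Real.pi / T * t) = if m = 0 then T else 0 := by
  split_ifs with hm
  · simp [hm]
  · have hfreq : (m * Real.pi / T : ℝ) ≠ 0 := by
      have := Real.pi_ne_zero
      positivity
    rw [intervalIntegral.integral_comp_mul_left (fun x ↦ Real.cos x) hfreq, integral_cos,
      div_mul_cancel₀ _ hT.ne', mul_zero, Real.sin_int_mul_pi]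
    simp

lemma integral_cos_mul_cos (hT : 0 < T) (i j : ℕ) :
    ∫ t in 0..T, Real.cos (i * Real.pi / T * t) * Real.cos (j * Real.pi / T * t) =
      if i = j then if i = 0 then T else T / 2 else 0 := by
  have hprod (t : ℝ) : Real.cos (i * Real.pi / T * t) * Real.cos (j * Real.pi / T * t) =
      (Real.cos ((i - j : ℤ) * Real.pi / T * t) +
        Real.cos ((i + j : ℤ) * Real.pi / T * t)) / 2 := by
    have hsub : ((i - j : ℤ) : ℝ) * Real.pi / T * t =
      i * Real.pi / T * t - j * Real.pi / T * t := by push_cast; ring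
    have hadd : ((i + j : ℤ) : ℝ) * Real.pi / T * t =
      i * Real.pi / T * t + j * Real.pi / T * t := by push_cast; ring
    rw [hsub, hadd, Real.cos_sub, Real.cos_add]
    ring
  simp only [hprod]
  rw [intervalIntegral.integral_div, intervalIntegral.integral_add
    (Continuous.intervalIntegrable (by fun_prop) _ _)
    (Continuous.intervalIntegrable (by fun_prop) _ _),
    integral_cos_int_mul_pi_div hT, integral_cos_int_mul_pi_div hT]
  simp only [sub_eq_zero, Nat.cast_inj]
  split_ifs <;> first | omega | ring

lemma integral_cosBasis_mul_cosBasis (hT : 0 < T) (i j : ℕ) :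
    ∫ t in 0..T, cosBasis T i t * cosBasis T j t = if i = j then 1 else 0 := by
  simp only [cosBasis, mul_mul_mul_comm _ (Real.cos _)]
  rw [intervalIntegral.integral_const_mul, integral_cos_mul_cos hT]
  rcases eq_or_ne i j with rfl | hij
  · have hone : √(1 / T) * √(1 / T) = 1 / T := Real.mul_self_sqrt (by positivity)
    have htwo : √(2 / T) * √(2 / T) = 2 / T := Real.mul_self_sqrt (by positivity)
    rw [if_pos rfl, if_pos rfl]
    split_ifs <;> simp only [hone, htwo] <;> field_simp
  · simp [hij]

lemma integral_cosBasis_eq_zero (hT : 0 < T) {j : ℕ} (hj : j ≠ 0) :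
    ∫ t in 0..T, cosBasis T j t = 0 := by
  have hcos := integral_cos_int_mul_pi_div hT j
  rw [if_neg (by exact_mod_cast hj)] at hcos
  simp only [cosBasis, intervalIntegral.integral_const_mul]
  exact mul_eq_zero_of_right _ hcos

end CosineBasis

section WienerCovariance

variable {T k t : ℝ}

/-- Split at `t`: the minimum is `k + s` on `[0, t]`, where one integrates by parts. -/
lemma integral_mul_min_add {f F G : ℝ → ℝ} (hf : Continuous f) (hF : ∀ s, HasDerivAt F (f s) s)
    (hG : ∀ s, HasDerivAt G (F s) s) (ht : t ∈ Set.Icc 0 T) :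
    ∫ s in 0..T, f s * min (k + t) (k + s) = (k + t) * F T - k * F 0 - (G t - G 0) := by
  have hcont : Continuous fun s ↦ f s * min (k + t) (k + s) := by fun_prop
  have hleft : ∫ s in 0..t, f s * min (k + t) (k + s) =
      ((k + t) * F t - G t) - ((k + 0) * F 0 - G 0) := by
    rw [← intervalIntegral.integral_eq_sub_of_hasDerivAt (f := fun s ↦ (k + s) * F s - G s)
      (f' := fun s ↦ f s * (k + s)) (fun s _ ↦ ?_)
      (Continuous.intervalIntegrable (by fun_prop) _ _)]
    · refine intervalIntegral.integral_congr fun s hs ↦ ?_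
      rw [Set.uIcc_of_le ht.1] at hs
      simp only [min_eq_right (add_le_add_right hs.2 k)]
    · refine ((((hasDerivAt_id s).const_add k).mul (hF s)).sub (hG s)).congr_deriv ?_
      simp only [id]
      ring
  have hright : ∫ s in t..T, f s * min (k + t) (k + s) = (F T - F t) * (k + t) := by
    rw [← intervalIntegral.integral_eq_sub_of_hasDerivAt (fun s _ ↦ hF s)
      (hf.intervalIntegrable _ _), ← intervalIntegral.integral_mul_const]
    refine intervalIntegral.integral_congr fun s hs ↦ ?_
    rw [Set.uIcc_of_le ht.2] at hs
    simp only [min_eq_left (add_le_add_right hs.1 k)]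
  rw [← intervalIntegral.integral_add_adjacent_intervals (hcont.intervalIntegrable 0 t)
    (hcont.intervalIntegrable t T), hleft, hright]
  ring

lemma integral_cosBasis_mul_min_add (hT : 0 < T) {j : ℕ} (hj : j ≠ 0) (ht : t ∈ Set.Icc 0 T) :
    ∫ s in 0..T, cosBasis T j s * min (k + t) (k + s) =
      T ^ 2 / Real.pi ^ 2 / j ^ 2 * (cosBasis T j t - cosBasis T j 0) := by
  set a : ℝ := j * Real.pi / T with ha
  have ha₀ : a ≠ 0 := by positivity
  have hcosBasis (s : ℝ) : cosBasis T j s = √(2 / T) * Real.cos (a * s) := by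
    rw [cosBasis, if_neg hj]
  have hlin (s : ℝ) : HasDerivAt (fun s ↦ a * s) a s := by
    simpa using (hasDerivAt_id s).const_mul a
  have hF (s : ℝ) : HasDerivAt (fun s ↦ √(2 / T) * (Real.sin (a * s) / a)) (cosBasis T j s) s := by
    refine (((hlin s).sin.div_const a).const_mul √(2 / T)).congr_deriv ?_
    rw [hcosBasis]
    field_simp
  have hG (s : ℝ) : HasDerivAt (fun s ↦ √(2 / T) * (-Real.cos (a * s) / a ^ 2))
      (√(2 / T) * (Real.sin (a * s) / a)) s := by
    refine (((hlin s).cos.neg.div_const (a ^ 2)).const_mul √(2 / T)).congr_deriv ?_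
    field_simp
  have hsin : Real.sin (a * T) = 0 := by
    rw [ha, div_mul_cancel₀ _ hT.ne', Real.sin_nat_mul_pi]
  have heigen : T ^ 2 / Real.pi ^ 2 / (j : ℝ) ^ 2 = 1 / a ^ 2 := by
    rw [ha]
    field_simp
  rw [integral_mul_min_add (continuous_cosBasis T j) hF hG ht, heigen, hsin]
  simp only [hcosBasis, mul_zero, Real.sin_zero]
  ring

lemma integral_integral_cosBasis_mul_min_add (hT : 0 < T) {i j : ℕ} (hi : i ≠ 0) (hj : j ≠ 0) :
    ∫ t in 0..T, ∫ s in 0..T, cosBasis T i t * cosBasis T j s * min (k + t) (k + s) =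
      if i = j then T ^ 2 / Real.pi ^ 2 / j ^ 2 else 0 := by
  have hinner : ∀ t ∈ Set.uIcc 0 T,
      ∫ s in 0..T, cosBasis T i t * cosBasis T j s * min (k + t) (k + s) =
        T ^ 2 / Real.pi ^ 2 / j ^ 2 *
          (cosBasis T i t * cosBasis T j t - cosBasis T j 0 * cosBasis T i t) := by
    intro t ht
    rw [Set.uIcc_of_le hT.le] at ht
    simp only [mul_assoc (cosBasis T i t)]
    rw [intervalIntegral.integral_const_mul, integral_cosBasis_mul_min_add hT hj ht]
    ring
  rw [intervalIntegral.integral_congr hinner, intervalIntegral.integral_const_mul,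
    intervalIntegral.integral_sub (Continuous.intervalIntegrable (by fun_prop) _ _)
      (Continuous.intervalIntegrable (by fun_prop) _ _),
    intervalIntegral.integral_const_mul, integral_cosBasis_mul_cosBasis hT,
    integral_cosBasis_eq_zero hT hi, mul_zero, sub_zero, mul_ite, mul_one, mul_zero]

lemma integral_integral_cosBasis_zero_mul_min_add (hT : 0 < T) :
    ∫ t in 0..T, ∫ s in 0..T, cosBasis T 0 t * cosBasis T 0 s * min (k + t) (k + s) =
      k * T + T ^ 2 / 3 := by
  have hF (s : ℝ) : HasDerivAt (fun s : ℝ ↦ s) 1 s := hasDerivAt_id s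
  have hG (s : ℝ) : HasDerivAt (fun s : ℝ ↦ s ^ 2 / 2) s s :=
    ((hasDerivAt_pow 2 s).div_const 2).congr_deriv (by simp)
  have hinner : ∀ t ∈ Set.uIcc 0 T,
      ∫ s in 0..T, cosBasis T 0 t * cosBasis T 0 s * min (k + t) (k + s) =
        1 / T * (k * T + t * T - t ^ 2 / 2) := by
    intro t ht
    rw [Set.uIcc_of_le hT.le] at ht
    have h := integral_mul_min_add (k := k) continuous_const hF hG ht
    simp only [one_mul] at h
    rw [cosBasis_zero]
    simp only [cosBasis_zero]
    rw [intervalIntegral.integral_const_mul, Real.mul_self_sqrt (by positivity), h]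
    ring
  rw [intervalIntegral.integral_congr hinner, intervalIntegral.integral_const_mul,
    intervalIntegral.integral_sub (Continuous.intervalIntegrable (by fun_prop) _ _)
      (Continuous.intervalIntegrable (by fun_prop) _ _),
    intervalIntegral.integral_add (Continuous.intervalIntegrable (by fun_prop) _ _)
      (Continuous.intervalIntegrable (by fun_prop) _ _)]
  simp only [intervalIntegral.integral_const, intervalIntegral.integral_mul_const, integral_id,
    intervalIntegral.integral_div, integral_pow, smul_eq_mul]
  field_simp
  ring

end WienerCovariance

section L2Interval

variable {T : ℝ}

lemma inner_Lp_Icc_eq_intervalIntegral (hT : 0 ≤ T) {x y : Lp ℝ 2 (volume.restrict (Set.Icc 0 T))}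
    {f g : ℝ → ℝ} (hx : x =ᵐ[volume.restrict (Set.Icc 0 T)] f)
    (hy : y =ᵐ[volume.restrict (Set.Icc 0 T)] g) : inner ℝ x y = ∫ t in 0..T, f t * g t := by
  rw [L2.inner_def, intervalIntegral.integral_of_le hT, ← integral_Icc_eq_integral_Ioc]
  refine integral_congr_ae ?_
  filter_upwards [hx, hy] with t hxt hyt
  rw [hxt, hyt, RCLike.inner_apply, conj_trivial, mul_comm]

lemma norm_sq_Lp_Icc_eq_intervalIntegral (hT : 0 ≤ T)
    {x : Lp ℝ 2 (volume.restrict (Set.Icc 0 T))} {f : ℝ → ℝ}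
    (hx : x =ᵐ[volume.restrict (Set.Icc 0 T)] f) : ‖x‖ ^ 2 = ∫ t in 0..T, f t ^ 2 := by
  simp only [← real_inner_self_eq_norm_sq, inner_Lp_Icc_eq_intervalIntegral hT hx hx, ← sq]

lemma memLp_cosBasis (T : ℝ) (j : ℕ) : MemLp (cosBasis T j) 2 (volume.restrict (Set.Icc 0 T)) :=
  (memLp_two_iff_integrable_sq (continuous_cosBasis T j).aestronglyMeasurable).2
    (((continuous_cosBasis T j).pow 2).continuousOn.integrableOn_compact isCompact_Icc)

/-- `cosBasis T j` as an element of `L²([0, T])`. -/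
noncomputable def cosBasisLp (T : ℝ) (j : ℕ) : Lp ℝ 2 (volume.restrict (Set.Icc 0 T)) :=
  (memLp_cosBasis T j).toLp

lemma coeFn_cosBasisLp (T : ℝ) (j : ℕ) :
    cosBasisLp T j =ᵐ[volume.restrict (Set.Icc 0 T)] cosBasis T j :=
  (memLp_cosBasis T j).coeFn_toLp

lemma orthonormal_cosBasisLp (hT : 0 < T) : Orthonormal ℝ (cosBasisLp T) := by
  rw [orthonormal_iff_ite]
  intro i j
  rw [inner_Lp_Icc_eq_intervalIntegral hT.le (coeFn_cosBasisLp T i) (coeFn_cosBasisLp T j),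
    integral_cosBasis_mul_cosBasis hT]

end L2Interval

namespace HasGaussianCovariance

variable {Ω : Type*} [MeasurableSpace Ω] {P : Measure Ω} {T : ℝ} {Z : ℝ → Ω → ℝ}
  {X : Ω → Lp ℝ 2 (volume.restrict (Set.Icc 0 T))}

section NormMoment

variable {K : ℝ → ℝ → ℝ} (hT : 0 < T) (h : HasGaussianCovariance P Z (Set.Icc 0 T) K)
  (hcont : ∀ᵐ ω ∂P, ContinuousOn (fun t ↦ Z t ω) (Set.Icc 0 T))
  (hK : ContinuousOn (fun t ↦ K t t) (Set.Icc 0 T)) (hK₀ : ∀ t ∈ Set.Icc 0 T, 0 ≤ K t t)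
  (hXmeas : AEStronglyMeasurable X P)
  (hXZ : ∀ᵐ ω ∂P, X ω =ᵐ[volume.restrict (Set.Icc 0 T)] fun t ↦ Z t ω)

include hT h hcont hK hK₀ hXZ

lemma lintegral_norm_sq_le :
    ∫⁻ ω, ENNReal.ofReal (‖X ω‖ ^ 2) ∂P ≤ ENNReal.ofReal (∫ t in 0..T, K t t) := by
  refine (lintegral_congr_ae ?_).trans_le (h.lintegral_integral_sq_le hT hcont hK hK₀)
  filter_upwards [hXZ] with ω hω
  rw [norm_sq_Lp_Icc_eq_intervalIntegral hT.le hω]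

include hXmeas

lemma memLp_two : MemLp X 2 P := by
  refine (memLp_two_iff_integrable_sq_norm hXmeas).2 ⟨hXmeas.norm.pow 2, ?_⟩
  rw [hasFiniteIntegral_iff_ofReal (ae_of_all _ fun ω ↦ by positivity)]
  exact (h.lintegral_norm_sq_le hT hcont hK hK₀ hXZ).trans_lt ENNReal.ofReal_lt_top

lemma integral_norm_sq_le : ∫ ω, ‖X ω‖ ^ 2 ∂P ≤ ∫ t in 0..T, K t t := by
  have hmeas : AEStronglyMeasurable (fun ω ↦ ‖X ω‖ ^ 2) P := hXmeas.norm.pow 2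
  rw [integral_eq_lintegral_of_nonneg_ae (ae_of_all _ fun ω ↦ by positivity) hmeas]
  refine ENNReal.toReal_le_of_le_ofReal ?_ (h.lintegral_norm_sq_le hT hcont hK hK₀ hXZ)
  exact intervalIntegral.integral_nonneg hT.le hK₀

end NormMoment

section WienerCovariance

variable {k : ℝ} [IsProbabilityMeasure P] (hT : 0 < T)
  (h : HasGaussianCovariance P Z (Set.Icc 0 T) fun t s ↦ min (k + t) (k + s))
  (hcont : ∀ᵐ ω ∂P, ContinuousOn (fun t ↦ Z t ω) (Set.Icc 0 T))
  (hXZ : ∀ᵐ ω ∂P, X ω =ᵐ[volume.restrict (Set.Icc 0 T)] fun t ↦ Z t ω)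

include hT h hcont hXZ

lemma hasLaw_inner_cosBasisLp_zero :
    HasLaw (fun ω ↦ inner ℝ (cosBasisLp T 0) (X ω))
      (gaussianReal 0 (k * T + T ^ 2 / 3).toNNReal) P := by
  have hlaw := h.hasLaw_integral hT hcont (by fun_prop) (continuous_cosBasis T 0).continuousOn
  rw [integral_integral_cosBasis_zero_mul_min_add hT] at hlaw
  refine hlaw.congr ?_
  filter_upwards [hXZ] with ω hω
  exact inner_Lp_Icc_eq_intervalIntegral hT.le (coeFn_cosBasisLp T 0) hω

lemma hasLaw_inner_cosBasisLp_succ (N : ℕ) :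
    HasLaw (fun ω (j : Fin N) ↦ inner ℝ (cosBasisLp T (j + 1)) (X ω))
      (gaussianPi fun j : Fin N ↦ brownianVariance (T ^ 2 / Real.pi ^ 2).toNNReal j) P := by
  have hlaw := h.hasLaw_integral_pi hT hcont (by fun_prop)
    (g := fun j : Fin N ↦ cosBasis T (j + 1))
    (v := fun j ↦ brownianVariance (T ^ 2 / Real.pi ^ 2).toNNReal j)
    (fun j ↦ (continuous_cosBasis T _).continuousOn) fun i j ↦ ?_
  · refine hlaw.congr ?_
    filter_upwards [hXZ] with ω hω
    ext j
    exact inner_Lp_Icc_eq_intervalIntegral hT.le (coeFn_cosBasisLp T _) hω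
  · rw [integral_integral_cosBasis_mul_min_add hT (Nat.succ_ne_zero _) (Nat.succ_ne_zero _),
      coe_brownianVariance, Real.coe_toNNReal _ (by positivity)]
    rcases eq_or_ne i j with rfl | hij
    · simp
    · simp [hij, Fin.val_injective.ne hij]

lemma hasBrownianSpectrum (hk : 0 ≤ k) (hXmeas : AEStronglyMeasurable X P) :
    HasBrownianSpectrum P X (cosBasisLp T) (T ^ 2 / Real.pi ^ 2).toNNReal := by
  have hdiag : Continuous fun t : ℝ ↦ min (k + t) (k + t) := by fun_prop
  have hdiag₀ : ∀ t ∈ Set.Icc 0 T, 0 ≤ min (k + t) (k + t) := fun t ht ↦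
    (min_self _).ge.trans' (add_nonneg hk ht.1)
  have hlaw := h.hasLaw_inner_cosBasisLp_zero hT hcont hXZ
  have hlawsq : ∫ ω, inner ℝ (cosBasisLp T 0) (X ω) ^ 2 ∂P = k * T + T ^ 2 / 3 := by
    refine (hlaw.integral_comp (f := fun x ↦ x ^ 2) (by fun_prop)).trans ?_
    rw [integral_sq_gaussianReal, Real.coe_toNNReal _ (by positivity)]
  refine ⟨orthonormal_cosBasisLp hT, h.memLp_two hT hcont hdiag.continuousOn hdiag₀ hXmeas hXZ,
    ?_, fun N ↦ (h.hasLaw_inner_cosBasisLp_succ hT hcont hXZ N).map_eq, ?_⟩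
  · have hid := memLp_id_gaussianReal (μ := 0) (v := (k * T + T ^ 2 / 3).toNNReal) 4
    rw [← hlaw.map_eq] at hid
    exact hid.comp_of_map hlaw.aemeasurable
  · refine (h.integral_norm_sq_le hT hcont hdiag.continuousOn hdiag₀ hXmeas hXZ).trans_eq ?_
    rw [hlawsq, Real.coe_toNNReal _ (by positivity)]
    simp only [min_self]
    rw [intervalIntegral.integral_add (by simp) (by simp), intervalIntegral.integral_const,
      integral_id, smul_eq_mul]
    field_simp
    ring

end WienerCovariance

end HasGaussianCovariance

/-- For a GSP-Wiener process `Z` on `[0,T]` (centered Gaussian with covariance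
`min (k+t) (k+s)`, a.s. continuous paths), viewed as an `L²([0,T])`-valued
random variable `X`, the quantization error has the sharp asymptotics
`e_n(Z) ~ (√2·T/π)·(ln n)^{-1/2}`. -/
theorem gsp_wiener_quantization_error_sharp
    {Ω : Type*} [MeasurableSpace Ω] (P : Measure Ω) [IsProbabilityMeasure P]
    (T k : ℝ) (hT : 0 < T) (hk : 0 ≤ k)
    (Z : ℝ → Ω → ℝ)
    (hGauss : ∀ (m : ℕ) (t : Fin m → ℝ), (∀ i, t i ∈ Set.Icc 0 T) →
      ∀ c : Fin m → ℝ,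
        Measure.map (fun ω => ∑ i, c i * Z (t i) ω) P =
          gaussianReal 0
            (∑ i, ∑ j, c i * c j * min (k + t i) (k + t j)).toNNReal)
    (hcont : ∀ᵐ ω ∂P, ContinuousOn (fun t => Z t ω) (Set.Icc 0 T))
    (X : Ω → Lp ℝ 2 (volume.restrict (Set.Icc 0 T)))
    (hXmeas : AEStronglyMeasurable X P)
    (hXZ : ∀ᵐ ω ∂P,
      (X ω : ℝ → ℝ) =ᵐ[volume.restrict (Set.Icc 0 T)] fun t => Z t ω) :
    Tendsto (fun n : ℕ => Real.sqrt (Real.log n) * quantErr P X n)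
      atTop (nhds (Real.sqrt 2 * T / Real.pi)) := by
  have hcov : HasGaussianCovariance P Z (Set.Icc 0 T) fun t s ↦ min (k + t) (k + s) := hGauss
  have hspec : HasBrownianSpectrum P X (cosBasisLp T) (T ^ 2 / Real.pi ^ 2).toNNReal :=
    hcov.hasBrownianSpectrum hT hcont hXZ hk hXmeas
  have hlimit : √(2 * (T ^ 2 / Real.pi ^ 2).toNNReal) = √2 * T / Real.pi := by
    rw [Real.coe_toNNReal _ (by positivity), ← div_pow, Real.sqrt_mul zero_le_two,
      Real.sqrt_sq (by positivity), mul_div_assoc]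
  rw [← hlimit]
  exact hspec.tendsto_sqrt_log_mul_quantErr (Real.toNNReal_pos.2 (by positivity))
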